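/- arXiv:2110.11675 — 4 statements merged into one kernel-verified Lean document; each statement's English description precedes it below -/
import Mathlib

section
/- Let φ_1, …, φ_N be contractive similitudes on ℝ^d, let C = C_1 ∪ ⋯ ∪ C_m (m ≥ 2) be a union of pairwise disjoint nonempty compact connected sets C_j, and let K be the attractor of the IFS with condensation {C; φ_1, …, φ_N}. Suppose there exist points a, b ∈ K and a_j, b_j ∈ C_j (1 ≤ j ≤ m) such that (K,{a,b}) = A_1 + A_2 + ⋯ + A_{m+N} is a zipper decomposition, where A_1, …, A_{m+N} is a rearrangement (bijective relabeling) of the buttons (C_1,{a_1,b_1}), …, (C_m,{a_m,b_m}), (φ_1(K),{φ_1(a),φ_1(b)}), …, (φ_N(K),{φ_N(a),φ_N(b)}). If (i) both A_1 and A_{m+N} belong to {(C_1,{a_1,b_1}), …, (C_m,{a_m,b_m})}, and (ii) dim_H E > 1, where E is the attractor of {φ_1, …, φ_N} and dim_H denotes Hausdorff dimension, then K is a Whitney set. -/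
open Set MeasureTheory

noncomputable section

/-- A compact connected set `E ⊆ ℝ^d` is a Whitney set if there is a `C¹` function
`f : ℝ^d → ℝ` whose derivative vanishes on `E` but which is not constant on `E`. -/
def IsWhitneySet {d : ℕ} (E : Set (EuclideanSpace ℝ (Fin d))) : Prop :=
  IsCompact E ∧ IsConnected E ∧
    ∃ f : EuclideanSpace ℝ (Fin d) → ℝ,
      ContDiff ℝ 1 f ∧ (∀ x ∈ E, fderiv ℝ f x = 0) ∧
        ¬ ∀ x ∈ E, ∀ y ∈ E, f x = f y

/-- A zipper decomposition of the button `(K, {a,b})` into the sub-buttons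
`(A ℓ, {p ℓ, q ℓ})`, `ℓ = 0, …, k-1`:  `K = ⋃ A ℓ`, each `A ℓ` is a compact subset of `K`
containing its endpoints `p ℓ, q ℓ`; the chain of endpoints starts at `a`, ends at `b`,
consecutive buttons share exactly the common endpoint (`q ℓ = p (ℓ+1)` and the
intersection is a singleton), and non-consecutive buttons are disjoint. -/
def IsZipperDecomp {d : ℕ} (K : Set (EuclideanSpace ℝ (Fin d)))
    (a b : EuclideanSpace ℝ (Fin d)) {k : ℕ}
    (A : Fin k → Set (EuclideanSpace ℝ (Fin d)))
    (p q : Fin k → EuclideanSpace ℝ (Fin d)) : Prop :=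
  K = (⋃ ℓ, A ℓ) ∧
  (∀ ℓ, IsCompact (A ℓ) ∧ A ℓ ⊆ K ∧ p ℓ ∈ A ℓ ∧ q ℓ ∈ A ℓ) ∧
  (∀ ℓ : Fin k, (ℓ : ℕ) = 0 → p ℓ = a) ∧
  (∀ ℓ : Fin k, (ℓ : ℕ) = k - 1 → q ℓ = b) ∧
  (∀ ℓ ℓ' : Fin k, (ℓ : ℕ) + 1 = (ℓ' : ℕ) →
    q ℓ = p ℓ' ∧ ∃ x, A ℓ ∩ A ℓ' = {x}) ∧
  (∀ ℓ ℓ' : Fin k, (ℓ : ℕ) + 1 < (ℓ' : ℕ) → A ℓ ∩ A ℓ' = ∅)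

open scoped Manifold ContDiff Topology

/-!
Let `φ i` have ratio `ρ i`. Given weights `T i ≥ 0` with sum `1`, one looks for a function on `K`
that goes from `0` at `a` to `1` at `b`, climbs by `T i`, self-similarly, along each `φ i '' K`, and
is constant on the remaining buttons. On cylinders of level `n` this gives an affine
self-referential equation `f = c ± T w * f ∘ φ w⁻¹`, which contracts in the `C¹` norm as soon as
`T w < ρ w` for all words `w`. The dimension hypothesis yields `1 < ∑ i, ρ i`, so at a deep level
`∑ w, ρ w` is large, and weights proportional to `ρ w` are admissible, even after setting to `0`
those of the at most two cylinders that contain `a` or `b`. The function is then locally constant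
near `a` and `b`, hence near the points at which cylinders meet, and the equations can be glued by a
partition of unity into a single one on the whole space, whose solution is a Neumann series
converging in `C¹`. At a point of `K` its derivative is at most `θ < 1` times the derivative at
another point of `K`, so it vanishes on `K`.
-/

section SelfAffineSystems

variable {V : Type*} [NormedAddCommGroup V] [NormedSpace ℝ V]

/-- A piece of a self-affine description of a function `f` on a set `K`: the equation
`f (map x) = base + slope * f x`, imposed at the points `map x` of `carrier`. A set on which `f`
is constant is a piece of slope `0`, whose `map` is then irrelevant. -/
structure AffinePiece (V : Type*) [NormedAddCommGroup V] [NormedSpace ℝ V] where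
  carrier : Set V
  map : V ≃ᴬ[ℝ] V
  base : ℝ
  slope : ℝ

namespace AffinePiece

/-- The values that the equation of the piece prescribes to `f` when `f` agrees with `g`. -/
def extend (P : AffinePiece V) (g : V → ℝ) (y : V) : ℝ :=
  P.base + P.slope * g (P.map.symm y)

/-- The equation of the piece forces `f x = v` for every function `f` that agrees with `h` on the
boundary set `D`. -/
def HasValue (P : AffinePiece V) (D : Set V) (h : V → ℝ) (x : V) (v : ℝ) : Prop :=
  (P.slope = 0 ∧ P.base = v) ∨ ∃ e ∈ D, P.map e = x ∧ P.base + P.slope * h e = v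

variable {P : AffinePiece V} {D U : Set V} {g h : V → ℝ} {x : V} {v : ℝ}

theorem HasValue.eventually_extend_eq (hv : P.HasValue D h x v) (hU : U ∈ 𝓝ˢ D)
    (hloc : ∀ e ∈ D, ∀ᶠ y in 𝓝 e, h y = h e) :
    ∀ᶠ y in 𝓝 x, ∀ g, EqOn g h U → P.extend g y = v := by
  obtain ⟨hs, rfl⟩ | ⟨e, he, rfl, rfl⟩ := hv
  · simp [extend, hs]
  · have hψ : Filter.Tendsto P.map.symm (𝓝 (P.map e)) (𝓝 e) := by
      simpa using P.map.symm.continuous.tendsto (P.map e)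
    filter_upwards [hψ (hloc e he), hψ (mem_nhdsSet_iff_forall.1 hU e he)] with y hy hyU g hg
    have hval : h (P.map.symm y) = h e := hy
    rw [extend, hg hyU, hval]

theorem HasValue.base_eq (hv : P.HasValue D h x v) (hs : P.slope = 0) : P.base = v := by
  obtain ⟨-, hb⟩ | ⟨e, -, -, hb⟩ := hv
  · exact hb
  · simpa [hs] using hb

theorem contDiff_extend (P : AffinePiece V) (hg : ContDiff ℝ 1 g) : ContDiff ℝ 1 (P.extend g) :=
  contDiff_const.add
    (contDiff_const.mul (hg.comp P.map.symm.toContinuousAffineMap.contDiff))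

/-- A Lipschitz constant, for the `C¹` norm, of `g ↦ P.extend g`. -/
def gain (P : AffinePiece V) : ℝ :=
  |P.slope| * max 1 ‖P.map.symm.toContinuousAffineMap.contLinear‖

theorem abs_slope_le_gain (P : AffinePiece V) : |P.slope| ≤ P.gain :=
  le_mul_of_one_le_right (abs_nonneg _) (le_max_left _ _)

theorem norm_fderiv_extend_le (P : AffinePiece V) (hg : Differentiable ℝ g) (x : V) :
    ‖fderiv ℝ (P.extend g) x‖ ≤ P.gain * ‖fderiv ℝ g (P.map.symm x)‖ := by
  let A := P.map.symm.toContinuousAffineMap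
  have hA : HasFDerivAt P.map.symm A.contLinear x := A.hasFDerivAt
  have hD : HasFDerivAt (P.extend g)
      (P.slope • (fderiv ℝ g (P.map.symm x)).comp A.contLinear) x :=
    (((hg _).hasFDerivAt.comp x hA).const_mul P.slope).const_add P.base
  calc ‖fderiv ℝ (P.extend g) x‖
      = |P.slope| * ‖(fderiv ℝ g (P.map.symm x)).comp A.contLinear‖ := by
        rw [hD.fderiv, norm_smul, Real.norm_eq_abs]
    _ ≤ |P.slope| * (‖fderiv ℝ g (P.map.symm x)‖ * ‖A.contLinear‖) := by
        gcongr; exact ContinuousLinearMap.opNorm_comp_le _ _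
    _ ≤ |P.slope| * (‖fderiv ℝ g (P.map.symm x)‖ * max 1 ‖A.contLinear‖) := by
        gcongr; exact le_max_right _ _
    _ = P.gain * ‖fderiv ℝ g (P.map.symm x)‖ := by rw [gain, mul_right_comm, mul_assoc]

end AffinePiece

/-- The pieces `P l` are a consistent self-affine description, on the compact set `K`, of a
function equal to `h` on `D`: the pieces cover `K`, each equation refers to points of `K` only, and
the values forced at common points of two pieces and at points of `D` do not contradict each
other. -/
structure IsSelfAffineSystem (K D : Set V) (h : V → ℝ) {ι : Type*} (P : ι → AffinePiece V) :
    Prop where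
  iUnion_carrier : ⋃ l, (P l).carrier = K
  isCompact_carrier : ∀ l, IsCompact (P l).carrier
  carrier_subset : ∀ l, (P l).slope ≠ 0 → (P l).carrier ⊆ (P l).map '' K
  compatible : ∀ l l', l ≠ l' → ∀ x ∈ (P l).carrier, x ∈ (P l').carrier →
    ∃ v, (P l).HasValue D h x v ∧ (P l').HasValue D h x v
  boundary : ∀ l, ∀ e ∈ D, e ∈ (P l).carrier → (P l).HasValue D h e (h e)

/-- A partition of unity on `K` adapted to the pieces `P l` and to a neighbourhood `U` of the
boundary: gluing the extensions `(P l).extend g` of a function `g` with `g = h` on `U` returns `h`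
on `U`, and involves near each point of a piece only extensions that agree with that of the
piece. -/
structure IsAdaptedPartition (K U : Set V) (h : V → ℝ) {ι : Type*} [Fintype ι]
    (P : ι → AffinePiece V) (χ : ι → V → ℝ) : Prop where
  contDiff : ∀ l, ContDiff ℝ 1 (χ l)
  hasCompactSupport : ∀ l, HasCompactSupport (χ l)
  nonneg : ∀ l x, 0 ≤ χ l x
  sum_le_one : ∀ x, ∑ l, χ l x ≤ 1
  sum_eq_one : ∀ x ∈ K, ∑ l, χ l x = 1
  eq_of_mem : ∀ l, ∀ x ∈ U, χ l x ≠ 0 → (P l).slope = 0 ∧ (P l).base = h x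
  extend_eq : ∀ l₀, ∀ x ∈ (P l₀).carrier, ∀ l, x ∈ tsupport (χ l) → ∀ g, EqOn g h U →
    (P l).extend g =ᶠ[𝓝 x] (P l₀).extend g

variable {ι : Type*} {K D : Set V} {h : V → ℝ} {P : ι → AffinePiece V}

/-- The points near which `h` itself is constant and solves the equation of the piece. -/
def AffinePiece.flatSet (P : AffinePiece V) (h : V → ℝ) : Set V :=
  {x | ∀ᶠ y in 𝓝 x, P.slope = 0 ∧ P.base = h y}

/-- The points near which the two pieces prescribe the same values to functions equal to `h`
on `U`. -/
def AffinePiece.agreeSet (P Q : AffinePiece V) (h : V → ℝ) (U : Set V) : Set V :=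
  {x | ∀ᶠ y in 𝓝 x, ∀ g, EqOn g h U → P.extend g y = Q.extend g y}

theorem IsSelfAffineSystem.inter_subset_flatSet (hP : IsSelfAffineSystem K D h P)
    (hloc : ∀ e ∈ D, ∀ᶠ y in 𝓝 e, h y = h e)
    (hflat : ∀ l, ∀ e ∈ D, e ∈ (P l).carrier → (P l).slope = 0) (l : ι) :
    D ∩ (P l).carrier ⊆ (P l).flatSet h := by
  rintro e ⟨he, hel⟩
  have hs := hflat l e he hel
  filter_upwards [hloc e he] with y hy
  exact ⟨hs, ((hP.boundary l e he hel).base_eq hs).trans hy.symm⟩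

theorem IsSelfAffineSystem.inter_subset_agreeSet (hP : IsSelfAffineSystem K D h P)
    (hloc : ∀ e ∈ D, ∀ᶠ y in 𝓝 e, h y = h e) {U : Set V} (hU : U ∈ 𝓝ˢ D) (l l' : ι) :
    (P l).carrier ∩ (P l').carrier ⊆ (P l).agreeSet (P l') h U := by
  rintro x ⟨hx, hx'⟩
  obtain rfl | hne := eq_or_ne l l'
  · exact .of_forall fun _ _ _ => rfl
  · obtain ⟨v, hv, hv'⟩ := hP.compatible l l' hne x hx hx'
    filter_upwards [hv.eventually_extend_eq hU hloc, hv'.eventually_extend_eq hU hloc]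
      with y hy hy' g hg
    rw [hy g hg, hy' g hg]

theorem IsSelfAffineSystem.exists_boundary_nhds [Finite ι] (hP : IsSelfAffineSystem K D h P)
    (hD : IsClosed D) (hloc : ∀ e ∈ D, ∀ᶠ y in 𝓝 e, h y = h e)
    (hflat : ∀ l, ∀ e ∈ D, e ∈ (P l).carrier → (P l).slope = 0) :
    ∃ U, IsOpen U ∧ D ⊆ U ∧ ∀ l, closure U ∩ (P l).carrier ⊆ (P l).flatSet h := by
  let W : Set V := ⋂ l, ((P l).carrier \ (P l).flatSet h)ᶜ
  have hclosed l : IsClosed ((P l).carrier \ (P l).flatSet h) :=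
    (hP.isCompact_carrier l).isClosed.inter isOpen_setOfPred_eventually_nhds.isClosed_compl
  have hW : IsOpen W := isOpen_iInter_of_finite fun l => (hclosed l).isOpen_compl
  have hDW : D ⊆ W := fun e he => mem_iInter.2 fun l hel =>
    hel.2 (hP.inter_subset_flatSet hloc hflat l ⟨he, hel.1⟩)
  obtain ⟨U, hUo, hDU, hUW⟩ := normal_exists_closure_subset hD hW hDW
  refine ⟨U, hUo, hDU, fun l x hx => ?_⟩
  by_contra hxG
  exact mem_iInter.1 (hUW hx.1) l ⟨hx.2, hxG⟩

theorem IsSelfAffineSystem.exists_cover [Finite ι] (hP : IsSelfAffineSystem K D h P)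
    (hloc : ∀ e ∈ D, ∀ᶠ y in 𝓝 e, h y = h e) {U : Set V} (hUo : IsOpen U) (hDU : D ⊆ U)
    (hU : ∀ l, closure U ∩ (P l).carrier ⊆ (P l).flatSet h) (l : ι) :
    ∃ O, IsOpen O ∧ Bornology.IsBounded O ∧ (P l).carrier ⊆ O ∧ O ∩ U ⊆ (P l).flatSet h ∧
      ∀ l', O ∩ (P l').carrier ⊆ (P l).agreeSet (P l') h U := by
  let far : Set V := closure U \ (P l).flatSet h
  let bad : ι → Set V := fun l' => (P l').carrier \ (P l).agreeSet (P l') h U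
  have hfar : IsClosed far :=
    isClosed_closure.inter isOpen_setOfPred_eventually_nhds.isClosed_compl
  have hbad : IsClosed (⋃ l', bad l') := isClosed_iUnion_of_finite fun l' =>
    (hP.isCompact_carrier l').isClosed.inter isOpen_setOfPred_eventually_nhds.isClosed_compl
  refine ⟨Metric.thickening 1 (P l).carrier ∩ (farᶜ ∩ (⋃ l', bad l')ᶜ),
    Metric.isOpen_thickening.inter (hfar.isOpen_compl.inter hbad.isOpen_compl),
    (hP.isCompact_carrier l).isBounded.thickening.subset inter_subset_left, ?_, ?_, ?_⟩
  · refine fun x hx => ⟨Metric.self_subset_thickening one_pos _ hx,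
      fun hxf => hxf.2 (hU l ⟨hxf.1, hx⟩), fun hxb => ?_⟩
    obtain ⟨l', hxl', hxN⟩ := mem_iUnion.1 hxb
    exact hxN (hP.inter_subset_agreeSet hloc (hUo.mem_nhdsSet.2 hDU) l l' ⟨hx, hxl'⟩)
  · rintro x ⟨⟨-, hxf, -⟩, hxU⟩
    by_contra hxG
    exact hxf ⟨subset_closure hxU, hxG⟩
  · rintro l' x ⟨⟨-, -, hxb⟩, hxl'⟩
    by_contra hxN
    exact hxb (mem_iUnion.2 ⟨l', hxl', hxN⟩)

theorem IsSelfAffineSystem.exists_isAdaptedPartition [FiniteDimensional ℝ V] [Fintype ι]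
    (hP : IsSelfAffineSystem K D h P)
    (hD : IsClosed D) (hloc : ∀ e ∈ D, ∀ᶠ y in 𝓝 e, h y = h e)
    (hflat : ∀ l, ∀ e ∈ D, e ∈ (P l).carrier → (P l).slope = 0) :
    ∃ U, D ⊆ U ∧ ∃ χ : ι → V → ℝ, IsAdaptedPartition K U h P χ := by
  obtain ⟨U, hUo, hDU, hU⟩ := hP.exists_boundary_nhds hD hloc hflat
  choose O hOo hOb hAO hOU hOA using hP.exists_cover hloc hUo hDU hU
  have hKO : K ⊆ ⋃ l, O l := hP.iUnion_carrier ▸ iUnion_mono hAO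
  have hK : IsClosed K :=
    hP.iUnion_carrier ▸ isClosed_iUnion_of_finite fun l => (hP.isCompact_carrier l).isClosed
  obtain ⟨χ, hχ⟩ := SmoothPartitionOfUnity.exists_isSubordinate 𝓘(ℝ, V) hK O hOo hKO
  refine ⟨U, hDU, fun l => χ l, ?_, ?_, fun l => χ.nonneg l, ?_, ?_, ?_, ?_⟩
  · exact fun l => ((χ l).contMDiff.contDiff).of_le (by exact_mod_cast le_top)
  · exact fun l => Metric.isCompact_of_isClosed_isBounded (isClosed_tsupport _)
      ((hOb l).subset (hχ l))
  · exact fun x => finsum_eq_sum_of_fintype (fun l => χ l x) ▸ χ.sum_le_one x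
  · exact fun x hx => finsum_eq_sum_of_fintype (fun l => χ l x) ▸ χ.sum_eq_one hx
  · exact fun l x hxU hχx => (hOU l ⟨hχ l (subset_tsupport _ hχx), hxU⟩).self_of_nhds
  · exact fun l₀ x hx l hxl g hg => (hOA l l₀ ⟨hχ l hxl, hx⟩).mono fun y hy => hy g hg

/-- The piece with the linear part of the equation of `P`. -/
def AffinePiece.linear (P : AffinePiece V) : AffinePiece V := { P with base := 0 }

theorem AffinePiece.extend_add (P : AffinePiece V) (f g : V → ℝ) (y : V) :
    P.extend (f + g) y = P.extend f y + P.linear.extend g y := by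
  simp only [extend, linear, Pi.add_apply]
  ring

section FixedPoint

variable [Fintype ι] {U : Set V} {χ : ι → V → ℝ} {θ : ℝ} {G : V → ℝ}

/-- The linear operator whose Neumann series solves the glued functional equation. -/
def transfer (P : ι → AffinePiece V) (χ : ι → V → ℝ) (G : V → ℝ) (y : V) : ℝ :=
  ∑ l, χ l y * (P l).linear.extend G y

theorem IsAdaptedPartition.contDiff_transfer (hχ : IsAdaptedPartition K U h P χ)
    (hG : ContDiff ℝ 1 G) : ContDiff ℝ 1 (transfer P χ G) :=
  ContDiff.sum fun l _ => (hχ.contDiff l).mul ((P l).linear.contDiff_extend hG)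

theorem IsAdaptedPartition.sum_mul_le (hχ : IsAdaptedPartition K U h P χ) {c : ι → ℝ} {C : ℝ}
    (hC : 0 ≤ C) (hc : ∀ l, c l ≤ C) (y : V) : ∑ l, χ l y * c l ≤ C :=
  calc ∑ l, χ l y * c l ≤ ∑ l, χ l y * C :=
        Finset.sum_le_sum fun l _ => mul_le_mul_of_nonneg_left (hc l) (hχ.nonneg l y)
    _ = (∑ l, χ l y) * C := (Finset.sum_mul ..).symm
    _ ≤ C := mul_le_of_le_one_left hC (hχ.sum_le_one y)

theorem AffinePiece.abs_linear_extend_le (Q : AffinePiece V) (hθ : Q.gain ≤ θ) {a : ℝ}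
    (hG : ∀ y, |G y| ≤ a) (y : V) : |Q.linear.extend G y| ≤ θ * a := by
  have hs : |Q.slope| ≤ θ := Q.abs_slope_le_gain.trans hθ
  simp only [extend, linear, zero_add, abs_mul]
  exact mul_le_mul hs (hG _) (abs_nonneg _) ((abs_nonneg _).trans hs)

theorem IsAdaptedPartition.abs_transfer_le (hχ : IsAdaptedPartition K U h P χ) (hθ0 : 0 ≤ θ)
    (hθ : ∀ l, (P l).gain ≤ θ) {a : ℝ} (hG : ∀ y, |G y| ≤ a) (y : V) :
    |transfer P χ G y| ≤ θ * a :=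
  calc |transfer P χ G y| ≤ ∑ l, |χ l y * (P l).linear.extend G y| :=
        Finset.abs_sum_le_sum_abs _ _
    _ = ∑ l, χ l y * |(P l).linear.extend G y| := by
        simp only [abs_mul, abs_of_nonneg (hχ.nonneg _ y)]
    _ ≤ θ * a := hχ.sum_mul_le (mul_nonneg hθ0 ((abs_nonneg _).trans (hG y)))
        (fun l => (P l).abs_linear_extend_le (hθ l) hG y) y

theorem IsAdaptedPartition.norm_fderiv_transfer_le (hχ : IsAdaptedPartition K U h P χ)
    (hθ0 : 0 ≤ θ) (hθ : ∀ l, (P l).gain ≤ θ) {Λ : ℝ} (hΛ : ∀ y, ∑ l, ‖fderiv ℝ (χ l) y‖ ≤ Λ)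
    (hG : ContDiff ℝ 1 G) {a b : ℝ} (hGa : ∀ y, |G y| ≤ a) (hGb : ∀ y, ‖fderiv ℝ G y‖ ≤ b)
    (y : V) : ‖fderiv ℝ (transfer P χ G) y‖ ≤ θ * b + θ * a * Λ := by
  have ha : 0 ≤ a := (abs_nonneg _).trans (hGa y)
  have hb : 0 ≤ b := (norm_nonneg _).trans (hGb y)
  have hE : ∀ l, ContDiff ℝ 1 ((P l).linear.extend G) := fun l => (P l).linear.contDiff_extend hG
  have hD : HasFDerivAt (transfer P χ G)
      (∑ l, (χ l y • fderiv ℝ ((P l).linear.extend G) y +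
        (P l).linear.extend G y • fderiv ℝ (χ l) y)) y :=
    HasFDerivAt.fun_sum fun l _ =>
      (((hχ.contDiff l).differentiable one_ne_zero y).hasFDerivAt).mul
        (((hE l).differentiable one_ne_zero y).hasFDerivAt)
  have hfirst : ∑ l, ‖χ l y • fderiv ℝ ((P l).linear.extend G) y‖ ≤ θ * b := by
    simp only [norm_smul, Real.norm_eq_abs, abs_of_nonneg (hχ.nonneg _ y)]
    exact hχ.sum_mul_le (mul_nonneg hθ0 hb) (fun l =>
      ((P l).linear.norm_fderiv_extend_le (hG.differentiable one_ne_zero) y).trans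
        (mul_le_mul (hθ l) (hGb _) (norm_nonneg _) hθ0)) y
  have hsecond : ∑ l, ‖(P l).linear.extend G y • fderiv ℝ (χ l) y‖ ≤ θ * a * Λ :=
    calc ∑ l, ‖(P l).linear.extend G y • fderiv ℝ (χ l) y‖
        ≤ ∑ l, θ * a * ‖fderiv ℝ (χ l) y‖ := by
          simp only [norm_smul, Real.norm_eq_abs]
          gcongr with l
          exact (P l).abs_linear_extend_le (hθ l) hGa y
      _ ≤ θ * a * Λ := by rw [← Finset.mul_sum]; gcongr; exact hΛ y
  rw [hD.fderiv, Finset.sum_add_distrib]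
  exact (norm_add_le _ _).trans (add_le_add ((norm_sum_le _ _).trans hfirst)
    ((norm_sum_le _ _).trans hsecond))

theorem IsAdaptedPartition.transfer_eq_zero (hχ : IsAdaptedPartition K U h P χ) {y : V}
    (hy : y ∈ U) : transfer P χ G y = 0 := by
  refine Finset.sum_eq_zero fun l _ => mul_eq_zero.2 (or_iff_not_imp_left.2 fun hl => ?_)
  simp [AffinePiece.extend, AffinePiece.linear, (hχ.eq_of_mem l y hy hl).1]

theorem IsAdaptedPartition.exists_sum_norm_fderiv_le (hχ : IsAdaptedPartition K U h P χ) :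
    ∃ Λ, ∀ y, ∑ l, ‖fderiv ℝ (χ l) y‖ ≤ Λ := by
  choose c hc using fun l => ((hχ.hasCompactSupport l).fderiv ℝ).exists_bound_of_continuous
    ((hχ.contDiff l).continuous_fderiv one_ne_zero)
  exact ⟨∑ l, c l, fun y => Finset.sum_le_sum fun l _ => hc l y⟩

theorem IsAdaptedPartition.iterate_transfer_bounds (hχ : IsAdaptedPartition K U h P χ)
    (hθ0 : 0 ≤ θ) (hθ : ∀ l, (P l).gain ≤ θ) {Λ : ℝ} (hΛ : ∀ y, ∑ l, ‖fderiv ℝ (χ l) y‖ ≤ Λ)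
    (hG : ContDiff ℝ 1 G) {a b : ℝ} (hGa : ∀ y, |G y| ≤ a) (hGb : ∀ y, ‖fderiv ℝ G y‖ ≤ b)
    (t : ℕ) : ContDiff ℝ 1 ((transfer P χ)^[t] G) ∧
      (∀ y, |(transfer P χ)^[t] G y| ≤ a * θ ^ t) ∧
      ∀ y, ‖fderiv ℝ ((transfer P χ)^[t] G) y‖ ≤ (b + t * (a * Λ)) * θ ^ t := by
  induction t with
  | zero => simpa using ⟨hG, hGa, hGb⟩
  | succ t ih =>
    obtain ⟨hC, ha, hb⟩ := ih
    simp only [Function.iterate_succ_apply']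
    refine ⟨hχ.contDiff_transfer hC, fun y => ?_, fun y => ?_⟩
    · calc _ ≤ θ * (a * θ ^ t) := hχ.abs_transfer_le hθ0 hθ ha y
        _ = a * θ ^ (t + 1) := by ring
    · calc _ ≤ θ * ((b + t * (a * Λ)) * θ ^ t) + θ * (a * θ ^ t) * Λ :=
            hχ.norm_fderiv_transfer_le hθ0 hθ hΛ hC ha hb y
        _ = (b + (t + 1 : ℕ) * (a * Λ)) * θ ^ (t + 1) := by push_cast; ring

theorem IsAdaptedPartition.contDiff_tsum_transfer (hχ : IsAdaptedPartition K U h P χ)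
    (hθ0 : 0 ≤ θ) (hθ : ∀ l, (P l).gain ≤ θ) (hθ1 : θ < 1)
    (hG : ContDiff ℝ 1 G) (hGc : HasCompactSupport G) :
    (∀ y, Summable fun t => (transfer P χ)^[t] G y) ∧
      ContDiff ℝ 1 fun y => ∑' t, (transfer P χ)^[t] G y := by
  obtain ⟨Λ, hΛ⟩ := hχ.exists_sum_norm_fderiv_le
  obtain ⟨a, hGa⟩ := hGc.exists_bound_of_continuous hG.continuous
  obtain ⟨b, hGb⟩ := (hGc.fderiv ℝ).exists_bound_of_continuous (hG.continuous_fderiv one_ne_zero)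
  have hbd := hχ.iterate_transfer_bounds hθ0 hθ hΛ hG hGa hGb
  have hsum0 : Summable fun t : ℕ => a * θ ^ t :=
    (summable_geometric_of_lt_one hθ0 hθ1).mul_left a
  have hsum1 : Summable fun t : ℕ => (b + t * (a * Λ)) * θ ^ t := by
    have hlin : Summable fun t : ℕ => (t : ℝ) * θ ^ t := by
      simpa using summable_pow_mul_geometric_of_norm_lt_one 1
        (by rwa [Real.norm_of_nonneg hθ0] : ‖θ‖ < 1)
    exact (((summable_geometric_of_lt_one hθ0 hθ1).mul_left b).add
      (hlin.mul_left (a * Λ))).congr fun t => by ring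
  refine ⟨fun y => hsum0.of_norm_bounded fun t => (hbd t).2.1 y,
    contDiff_tsum (v := fun (n t : ℕ) => if n = 0 then a * θ ^ t else (b + t * (a * Λ)) * θ ^ t)
      (fun t => (hbd t).1) (fun n _ => ?_) fun n t y hn => ?_⟩
  · split_ifs
    exacts [hsum0, hsum1]
  · have hn1 : n ≤ 1 := by exact_mod_cast hn
    interval_cases n
    · simpa using (hbd t).2.1 y
    · simpa [norm_iteratedFDeriv_one] using (hbd t).2.2 y

theorem IsAdaptedPartition.exists_glued_solution (hχ : IsAdaptedPartition K U h P χ)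
    (hθ0 : 0 ≤ θ) (hθ : ∀ l, (P l).gain ≤ θ) (hθ1 : θ < 1) (hh : ContDiff ℝ 1 h) :
    ∃ f, ContDiff ℝ 1 f ∧ EqOn f h U ∧
      ∀ y, f y = h y + ∑ l, χ l y * ((P l).extend f y - h y) := by
  let G₀ : V → ℝ := fun y => ∑ l, χ l y * ((P l).extend h y - h y)
  let S : V → ℝ := fun y => ∑' t, (transfer P χ)^[t] G₀ y
  have hG₀ : ContDiff ℝ 1 G₀ := ContDiff.sum fun l _ =>
    (hχ.contDiff l).mul (((P l).contDiff_extend hh).sub hh)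
  have hG₀c : HasCompactSupport G₀ :=
    .intro (isCompact_iUnion fun l => hχ.hasCompactSupport l) fun y hy =>
      Finset.sum_eq_zero fun l _ => by
        rw [image_eq_zero_of_notMem_tsupport fun hl => hy (mem_iUnion.2 ⟨l, hl⟩), zero_mul]
  obtain ⟨hsum, hS⟩ := hχ.contDiff_tsum_transfer hθ0 hθ hθ1 hG₀ hG₀c
  have hS_eq : ∀ y, S y = G₀ y + transfer P χ S y := fun y => by
    simp only [S, (hsum y).tsum_eq_zero_add, Function.iterate_zero, id,
      Function.iterate_succ_apply']
    congr 1
    simp only [transfer, AffinePiece.extend, AffinePiece.linear, zero_add]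
    rw [Summable.tsum_finsetSum fun l _ => ((hsum _).mul_left _).mul_left _]
    simp only [tsum_mul_left]
  have hzero : ∀ y ∈ U, S y = 0 := fun y hy => by
    have : G₀ y = 0 := Finset.sum_eq_zero fun l _ =>
      mul_eq_zero.2 (or_iff_not_imp_left.2 fun hl => by
        simp [AffinePiece.extend, hχ.eq_of_mem l y hy hl])
    rw [hS_eq, this, hχ.transfer_eq_zero hy, add_zero]
  refine ⟨h + S, hh.add hS, fun y hy => by simp [hzero y hy], fun y => ?_⟩
  rw [Pi.add_apply, hS_eq, transfer, ← Finset.sum_add_distrib]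
  simp only [AffinePiece.extend_add]
  congr! 2
  ring

end FixedPoint

theorem IsSelfAffineSystem.isCompact [Finite ι] (hP : IsSelfAffineSystem K D h P) :
    IsCompact K :=
  hP.iUnion_carrier ▸ isCompact_iUnion hP.isCompact_carrier

section CriticalOnK

variable [Fintype ι] {U : Set V} {χ : ι → V → ℝ} {f : V → ℝ}

theorem IsAdaptedPartition.sum_fderiv_eq_zero (hχ : IsAdaptedPartition K U h P χ) {x : V}
    (hx : x ∈ K) : ∑ l, fderiv ℝ (χ l) x = 0 := by
  have hmax : IsLocalMax (fun y => ∑ l, χ l y) x :=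
    .of_forall fun y => (hχ.sum_le_one y).trans_eq (hχ.sum_eq_one x hx).symm
  rw [← hmax.fderiv_eq_zero, fderiv_fun_sum fun l _ => (hχ.contDiff l).differentiable one_ne_zero x]

theorem IsAdaptedPartition.fderiv_eq (hχ : IsAdaptedPartition K U h P χ) (hf : ContDiff ℝ 1 f)
    (hh : ContDiff ℝ 1 h) (hfU : EqOn f h U)
    (heq : ∀ y, f y = h y + ∑ l, χ l y * ((P l).extend f y - h y))
    {x : V} (hx : x ∈ K) {l₀ : ι} (hl₀ : x ∈ (P l₀).carrier) :
    fderiv ℝ f x = fderiv ℝ ((P l₀).extend f) x := by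
  have hdiff : ∀ {u : V → ℝ}, ContDiff ℝ 1 u → HasFDerivAt u (fderiv ℝ u x) x :=
    fun hu => (hu.differentiable one_ne_zero x).hasFDerivAt
  have hD : HasFDerivAt f (fderiv ℝ h x +
      ∑ l, (χ l x • (fderiv ℝ ((P l).extend f) x - fderiv ℝ h x) +
        ((P l).extend f x - h x) • fderiv ℝ (χ l) x)) x := by
    exact ((hdiff hh).add (.fun_sum fun l _ => (hdiff (hχ.contDiff l)).mul
      ((hdiff ((P l).contDiff_extend hf)).sub (hdiff hh)))).congr_of_eventuallyEq (.of_forall heq)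
  have hterm : ∀ l, χ l x • (fderiv ℝ ((P l).extend f) x - fderiv ℝ h x) +
        ((P l).extend f x - h x) • fderiv ℝ (χ l) x =
      χ l x • (fderiv ℝ ((P l₀).extend f) x - fderiv ℝ h x) +
        ((P l₀).extend f x - h x) • fderiv ℝ (χ l) x := fun l => by
    by_cases hl : x ∈ tsupport (χ l)
    · have hloc := hχ.extend_eq l₀ x hl₀ l hl f hfU
      rw [hloc.fderiv_eq, hloc.eq_of_nhds]
    · rw [image_eq_zero_of_notMem_tsupport hl, fderiv_of_notMem_tsupport ℝ hl]
      simp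
  rw [hD.fderiv, Finset.sum_congr rfl fun l _ => hterm l, Finset.sum_add_distrib,
    ← Finset.sum_smul, ← Finset.smul_sum, hχ.sum_eq_one x hx, hχ.sum_fderiv_eq_zero hx]
  simp

/-- The derivative on `K` is dominated by `θ` times its value at another point of `K`, so its
maximum is `0`. -/
theorem IsSelfAffineSystem.fderiv_eq_zero {θ : ℝ} (hP : IsSelfAffineSystem K D h P)
    (hχ : IsAdaptedPartition K U h P χ) (hθ : ∀ l, (P l).gain ≤ θ) (hθ1 : θ < 1)
    (hf : ContDiff ℝ 1 f) (hh : ContDiff ℝ 1 h) (hfU : EqOn f h U)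
    (heq : ∀ y, f y = h y + ∑ l, χ l y * ((P l).extend f y - h y)) :
    ∀ x ∈ K, fderiv ℝ f x = 0 := by
  intro x hx
  obtain ⟨z, hz, hmax⟩ := hP.isCompact.exists_isMaxOn ⟨x, hx⟩
    (hf.continuous_fderiv one_ne_zero).norm.continuousOn
  obtain ⟨l, hl⟩ := mem_iUnion.1 (hP.iUnion_carrier ▸ hz)
  have hbound : ‖fderiv ℝ f z‖ ≤ (P l).gain * ‖fderiv ℝ f ((P l).map.symm z)‖ := by
    rw [hχ.fderiv_eq hf hh hfU heq hz hl]
    exact (P l).norm_fderiv_extend_le (hf.differentiable one_ne_zero) z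
  have hz0 : ‖fderiv ℝ f z‖ = 0 := by
    refine le_antisymm ?_ (norm_nonneg _)
    by_cases hs : (P l).slope = 0
    · simpa [AffinePiece.gain, hs] using hbound
    · obtain ⟨y, hy, rfl⟩ := hP.carrier_subset l hs hl
      rw [ContinuousAffineEquiv.symm_apply_apply] at hbound
      have : ‖fderiv ℝ f y‖ ≤ ‖fderiv ℝ f ((P l).map y)‖ := hmax hy
      have : (P l).gain * ‖fderiv ℝ f y‖ ≤ θ * ‖fderiv ℝ f ((P l).map y)‖ :=
        mul_le_mul (hθ l) this (norm_nonneg _) ((abs_nonneg _).trans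
          ((P l).abs_slope_le_gain.trans (hθ l)))
      nlinarith [norm_nonneg (fderiv ℝ f ((P l).map y))]
  have hxz : ‖fderiv ℝ f x‖ ≤ ‖fderiv ℝ f z‖ := hmax hx
  exact norm_le_zero_iff.1 (hxz.trans_eq hz0)

end CriticalOnK

theorem IsSelfAffineSystem.exists_contDiff [FiniteDimensional ℝ V] [Finite ι] {θ : ℝ}
    (hP : IsSelfAffineSystem K D h P) (hD : IsClosed D) (hh : ContDiff ℝ 1 h)
    (hloc : ∀ e ∈ D, ∀ᶠ y in 𝓝 e, h y = h e)
    (hflat : ∀ l, ∀ e ∈ D, e ∈ (P l).carrier → (P l).slope = 0)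
    (hθ0 : 0 ≤ θ) (hθ : ∀ l, (P l).gain ≤ θ) (hθ1 : θ < 1) :
    ∃ f, ContDiff ℝ 1 f ∧ EqOn f h D ∧ ∀ x ∈ K, fderiv ℝ f x = 0 := by
  have := Fintype.ofFinite ι
  obtain ⟨U, hDU, χ, hχ⟩ := hP.exists_isAdaptedPartition hD hloc hflat
  obtain ⟨f, hf, hfU, heq⟩ := hχ.exists_glued_solution hθ0 hθ hθ1 hh
  exact ⟨f, hf, hfU.mono hDU, hP.fderiv_eq_zero hχ hθ hθ1 hf hh hfU heq⟩

namespace AffinePiece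

/-- The piece obtained by substituting the equation of `Q` into that of `P`. -/
def subst (P Q : AffinePiece V) : AffinePiece V where
  carrier := P.carrier ∩ {x | P.slope = 0 ∨ P.map.symm x ∈ Q.carrier}
  map := Q.map.trans P.map
  base := P.base + P.slope * Q.base
  slope := P.slope * Q.slope

/-- The piece with the equation `f x = f x` on all of `K`. -/
def trivial (K : Set V) : AffinePiece V := ⟨K, .refl ℝ V, 0, 1⟩

variable {P Q : AffinePiece V} {x y : V} {v : ℝ}

theorem subst_hasValue_of_slope_eq_zero (Q : AffinePiece V) (hs : P.slope = 0) (x : V) :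
    (P.subst Q).HasValue D h x P.base :=
  .inl ⟨by simp [subst, hs], by simp [subst, hs]⟩

theorem HasValue.subst_map (hv : Q.HasValue D h y v) :
    (P.subst Q).HasValue D h (P.map y) (P.base + P.slope * v) := by
  obtain ⟨hs, rfl⟩ | ⟨e, he, rfl, rfl⟩ := hv
  · exact .inl ⟨by simp [subst, hs], rfl⟩
  · exact .inr ⟨e, he, rfl, by simp only [subst]; ring⟩

theorem HasValue.subst (hv : P.HasValue D h x v) (hx : x ∈ (P.subst Q).carrier)
    (hQ : ∀ e ∈ D, e ∈ Q.carrier → Q.HasValue D h e (h e)) : (P.subst Q).HasValue D h x v := by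
  by_cases hs : P.slope = 0
  · exact hv.base_eq hs ▸ subst_hasValue_of_slope_eq_zero Q hs x
  · obtain ⟨hs', -⟩ | ⟨e, he, rfl, rfl⟩ := hv
    · exact absurd hs' hs
    · have heQ : e ∈ Q.carrier := by simpa using hx.2.resolve_left hs
      exact (hQ e he heQ).subst_map

theorem isCompact_subst_carrier (hP : IsCompact P.carrier) (hQ : IsCompact Q.carrier) :
    IsCompact (P.subst Q).carrier := by
  refine hP.inter_right ?_
  by_cases hs : P.slope = 0
  · simp [hs]
  · simp only [hs, false_or]
    exact hQ.isClosed.preimage P.map.symm.continuous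

end AffinePiece

theorem isSelfAffineSystem_trivial (hK : IsCompact K) (D : Set V) (h : V → ℝ) :
    IsSelfAffineSystem K D h fun _ : Unit => AffinePiece.trivial K where
  iUnion_carrier := iUnion_const K
  isCompact_carrier _ := hK
  carrier_subset _ _ x hx := ⟨x, hx, rfl⟩
  compatible _ _ hne := absurd (Subsingleton.elim _ _) hne
  boundary _ e he _ := .inr ⟨e, he, rfl, by simp [AffinePiece.trivial]⟩

theorem IsSelfAffineSystem.subst {κ : ι → Type*} {Q : ∀ l, κ l → AffinePiece V}
    (hP : IsSelfAffineSystem K D h P) (hQ : ∀ l, IsSelfAffineSystem K D h (Q l)) :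
    IsSelfAffineSystem K D h fun s : Σ l, κ l => (P s.1).subst (Q s.1 s.2) where
  iUnion_carrier := by
    refine Subset.antisymm (iUnion_subset fun s x hx =>
      hP.iUnion_carrier ▸ mem_iUnion_of_mem s.1 hx.1) fun x hx => ?_
    obtain ⟨l, hl⟩ := mem_iUnion.1 (hP.iUnion_carrier ▸ hx)
    by_cases hs : (P l).slope = 0
    · obtain ⟨j, -⟩ := mem_iUnion.1 ((hQ l).iUnion_carrier ▸ hx)
      exact mem_iUnion_of_mem ⟨l, j⟩ ⟨hl, .inl hs⟩
    · obtain ⟨y, hy, rfl⟩ := hP.carrier_subset l hs hl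
      obtain ⟨j, hj⟩ := mem_iUnion.1 ((hQ l).iUnion_carrier ▸ hy)
      exact mem_iUnion_of_mem ⟨l, j⟩ ⟨hl, .inr (by simpa using hj)⟩
  isCompact_carrier s :=
    AffinePiece.isCompact_subst_carrier (hP.isCompact_carrier _) ((hQ _).isCompact_carrier _)
  carrier_subset := by
    rintro ⟨l, j⟩ hs x hx
    obtain ⟨hPs, hQs⟩ := mul_ne_zero_iff.1 hs
    obtain ⟨y, hy, rfl⟩ := hP.carrier_subset l hPs hx.1
    obtain ⟨z, hz, rfl⟩ := (hQ l).carrier_subset j hQs (by simpa using hx.2.resolve_left hPs)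
    exact ⟨z, hz, rfl⟩
  compatible := by
    rintro ⟨l, j⟩ ⟨l', j'⟩ hne x hx hx'
    obtain rfl | hl := eq_or_ne l l'
    · by_cases hs : (P l).slope = 0
      · exact ⟨_, AffinePiece.subst_hasValue_of_slope_eq_zero _ hs x,
          AffinePiece.subst_hasValue_of_slope_eq_zero _ hs x⟩
      · obtain ⟨v, hv, hv'⟩ := (hQ l).compatible j j' (fun hj => hne (hj ▸ rfl)) _
          (hx.2.resolve_left hs) (hx'.2.resolve_left hs)
        obtain ⟨y, rfl⟩ := (P l).map.surjective x
        rw [ContinuousAffineEquiv.symm_apply_apply] at hv hv'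
        exact ⟨_, hv.subst_map, hv'.subst_map⟩
    · obtain ⟨v, hv, hv'⟩ := hP.compatible l l' hl x hx.1 hx'.1
      exact ⟨v, hv.subst hx ((hQ l).boundary j), hv'.subst hx' ((hQ l').boundary j')⟩
  boundary s e he hx := (hP.boundary s.1 e he hx.1).subst hx ((hQ s.1).boundary s.2)

/-- A finite family of similitudes `e j` of ratio at most `1` mapping `K` into itself, such that
each boundary point lies in at most one cylinder `e j '' K`, and there only as the image of a
boundary point, and such that every probability vector `T` is realized by a self-affine system
for `K` whose nonconstant pieces are cylinders `e j '' K` with slope `± T j`. -/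
structure IsCylinderFamily (K D : Set V) (h : V → ℝ) {J : Type} [Fintype J]
    (e : J → V ≃ᴬ[ℝ] V) (ρ : J → ℝ) : Prop where
  pos : ∀ j, 0 < ρ j
  le_one : ∀ j, ρ j ≤ 1
  dist_map : ∀ j x y, dist (e j x) (e j y) = ρ j * dist x y
  mapsTo : ∀ j, MapsTo (e j) K K
  eq_of_map_eq : ∀ j j', ∀ y ∈ K, ∀ y' ∈ K, e j y = e j' y' → e j y ∈ D → j = j'
  mem_of_map_mem : ∀ j, ∀ y ∈ K, e j y ∈ D → y ∈ D
  realizable : ∀ T : J → ℝ, (∀ j, 0 ≤ T j) → ∑ j, T j = 1 →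
    ∃ (ι : Type) (_ : Fintype ι) (P : ι → AffinePiece V), IsSelfAffineSystem K D h P ∧
      ∀ l, (P l).slope = 0 ∨ ∃ j, (P l).map = e j ∧ |(P l).slope| = T j

namespace IsCylinderFamily

variable {J J' : Type} [Fintype J] [Fintype J'] {e : J → V ≃ᴬ[ℝ] V} {e' : J' → V ≃ᴬ[ℝ] V}
  {ρ : J → ℝ} {ρ' : J' → ℝ}

theorem refl (hK : IsCompact K) (D : Set V) (h : V → ℝ) :
    IsCylinderFamily K D h (fun _ : Unit => .refl ℝ V) (fun _ => 1) where
  pos _ := one_pos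
  le_one _ := le_rfl
  dist_map _ _ _ := (one_mul _).symm
  mapsTo _ := mapsTo_id K
  eq_of_map_eq _ _ _ _ _ _ _ _ := rfl
  mem_of_map_mem _ _ _ hy := hy
  realizable T _ hT1 := ⟨Unit, inferInstance, _, isSelfAffineSystem_trivial hK D h, fun _ =>
    .inr ⟨(), rfl, by simpa [AffinePiece.trivial] using hT1.symm⟩⟩

/-- A vector `T` on pairs is realized by realizing its marginal `∑ j, T (i, j)` and substituting
into each cylinder `i` a realization of the conditional weights. -/
theorem realizable_prod (hK : IsCompact K) (he : IsCylinderFamily K D h e ρ)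
    (he' : IsCylinderFamily K D h e' ρ') (T : J × J' → ℝ) (hT : ∀ s, 0 ≤ T s)
    (hT1 : ∑ s, T s = 1) :
    ∃ (ι : Type) (_ : Fintype ι) (P : ι → AffinePiece V), IsSelfAffineSystem K D h P ∧
      ∀ l, (P l).slope = 0 ∨ ∃ s : J × J', (P l).map = (e' s.2).trans (e s.1) ∧
        |(P l).slope| = T s := by
  let M : J → ℝ := fun i => ∑ j, T (i, j)
  obtain ⟨ι, _, P, hP, hPT⟩ := he.realizable M (fun i => Finset.sum_nonneg fun j _ => hT _)
    (by rw [← hT1, Fintype.sum_prod_type])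
  have hQ : ∀ l, ∃ (κ : Type) (_ : Fintype κ) (Q : κ → AffinePiece V),
      IsSelfAffineSystem K D h Q ∧ ∀ j, ((P l).subst (Q j)).slope = 0 ∨ ∃ s : J × J',
        ((P l).subst (Q j)).map = (e' s.2).trans (e s.1) ∧
          |((P l).subst (Q j)).slope| = T s := fun l => by
    by_cases hs : (P l).slope = 0
    · exact ⟨Unit, inferInstance, _, isSelfAffineSystem_trivial hK D h,
        fun _ => .inl (by simp [AffinePiece.subst, hs])⟩
    obtain ⟨i, hmap, hslope⟩ := (hPT l).resolve_left hs
    have hMi : 0 < M i := hslope ▸ abs_pos.2 hs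
    obtain ⟨κ, _, Q, hQ, hQT⟩ := he'.realizable (fun j => T (i, j) / M i)
      (fun j => div_nonneg (hT _) hMi.le) (by rw [← Finset.sum_div, div_self hMi.ne'])
    refine ⟨κ, inferInstance, Q, hQ, fun j => ?_⟩
    obtain hj | ⟨j', hmap', hslope'⟩ := hQT j
    · exact .inl (by simp [AffinePiece.subst, hj])
    · refine .inr ⟨(i, j'), by simp [AffinePiece.subst, hmap, hmap'], ?_⟩
      rw [AffinePiece.subst, abs_mul, hslope, hslope', mul_div_cancel₀ _ hMi.ne']
  choose κ hκ Q hQ hQT using hQ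
  exact ⟨Σ l, κ l, inferInstance, _, hP.subst hQ, fun s => hQT s.1 s.2⟩

theorem prod (hK : IsCompact K) (he : IsCylinderFamily K D h e ρ)
    (he' : IsCylinderFamily K D h e' ρ') :
    IsCylinderFamily K D h (fun s : J × J' => (e' s.2).trans (e s.1))
      (fun s => ρ s.1 * ρ' s.2) where
  pos s := mul_pos (he.pos _) (he'.pos _)
  le_one s := mul_le_one₀ (he.le_one _) (he'.pos _).le (he'.le_one _)
  dist_map s x y := by
    simp only [ContinuousAffineEquiv.coe_trans, Function.comp_apply, he.dist_map, he'.dist_map,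
      mul_assoc]
  mapsTo s := (he.mapsTo _).comp (he'.mapsTo _)
  eq_of_map_eq := by
    rintro ⟨i, j⟩ ⟨i', j'⟩ y hy y' hy' heq hD
    obtain rfl : i = i' :=
      he.eq_of_map_eq i i' _ (he'.mapsTo j hy) _ (he'.mapsTo j' hy') heq hD
    obtain rfl : j = j' := he'.eq_of_map_eq j j' y hy y' hy' ((e i).injective heq)
      (he.mem_of_map_mem i _ (he'.mapsTo j hy) hD)
    rfl
  mem_of_map_mem s y hy hD :=
    he'.mem_of_map_mem _ y hy (he.mem_of_map_mem _ _ (he'.mapsTo _ hy) hD)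
  realizable := realizable_prod hK he he'

theorem exists_pow (hK : IsCompact K) (he : IsCylinderFamily K D h e ρ) (n : ℕ) :
    ∃ (J' : Type) (_ : Fintype J') (e' : J' → V ≃ᴬ[ℝ] V) (ρ' : J' → ℝ),
      IsCylinderFamily K D h e' ρ' ∧ ∑ j, ρ' j = (∑ j, ρ j) ^ n := by
  induction n with
  | zero => exact ⟨Unit, inferInstance, _, _, refl hK D h, by simp⟩
  | succ n ih =>
    obtain ⟨J', _, e', ρ', he', hsum⟩ := ih
    refine ⟨J' × J, inferInstance, _, _, he'.prod hK he, ?_⟩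
    rw [pow_succ, ← hsum, Finset.sum_mul_sum, Fintype.sum_prod_type]

theorem norm_contLinear_symm_le (he : IsCylinderFamily K D h e ρ) (j : J) :
    ‖(e j).symm.toContinuousAffineMap.contLinear‖ ≤ (ρ j)⁻¹ := by
  refine ContinuousLinearMap.opNorm_le_bound _ (inv_nonneg.2 (he.pos j).le) fun v => ?_
  have hdist := he.dist_map j ((e j).symm v) ((e j).symm 0)
  have hlin : (e j).symm.toContinuousAffineMap.contLinear v = (e j).symm v - (e j).symm 0 := by
    simpa using (e j).symm.toContinuousAffineMap.contLinear_map_vsub v 0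
  rw [ContinuousAffineEquiv.apply_symm_apply, ContinuousAffineEquiv.apply_symm_apply,
    dist_zero_right, dist_eq_norm] at hdist
  rw [hlin, hdist, inv_mul_cancel_left₀ (he.pos j).ne']

open Classical in
theorem sum_boundary_le (he : IsCylinderFamily K D h e ρ) (hD : D.Finite) :
    ∑ j with ∃ y ∈ K, e j y ∈ D, ρ j ≤ D.ncard := by
  have hcard : {j | ∃ y ∈ K, e j y ∈ D}.ncard ≤ D.ncard := by
    choose! y hyK hyD using fun j (hj : ∃ y ∈ K, e j y ∈ D) => hj
    exact ncard_le_ncard_of_injOn (fun j => e j (y j)) hyD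
      (fun j hj j' hj' heq => he.eq_of_map_eq j j' _ (hyK j hj) _ (hyK j' hj') heq (hyD j hj)) hD
  calc ∑ j with ∃ y ∈ K, e j y ∈ D, ρ j ≤ ∑ j with ∃ y ∈ K, e j y ∈ D, (1 : ℝ) :=
        Finset.sum_le_sum fun j _ => he.le_one j
    _ = {j | ∃ y ∈ K, e j y ∈ D}.ncard := by simp [ncard_eq_toFinset_card']
    _ ≤ D.ncard := by exact_mod_cast hcard

/-- Cylinders meeting the boundary get weight `0` and the others weights proportional to their
ratios, so that the slopes beat the expansion of the inverse similitudes. -/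
theorem exists_contracting_system (he : IsCylinderFamily K D h e ρ) (hD : D.Finite)
    (hsum : 1 + D.ncard < ∑ j, ρ j) :
    ∃ (ι : Type) (_ : Fintype ι) (P : ι → AffinePiece V) (θ : ℝ), IsSelfAffineSystem K D h P ∧
      0 ≤ θ ∧ θ < 1 ∧ (∀ l, (P l).gain ≤ θ) ∧
        ∀ l, ∀ x ∈ D, x ∈ (P l).carrier → (P l).slope = 0 := by
  classical
  let S : ℝ := ∑ j with ¬ ∃ y ∈ K, e j y ∈ D, ρ j
  have hS : 1 < S := by
    have hsplit := Finset.sum_filter_add_sum_filter_not Finset.univ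
      (fun j => ∃ y ∈ K, e j y ∈ D) ρ
    linarith [he.sum_boundary_le hD]
  have hS0 : 0 < S := one_pos.trans hS
  let T : J → ℝ := fun j => if ¬ ∃ y ∈ K, e j y ∈ D then ρ j / S else 0
  have hT0 : ∀ j, 0 ≤ T j := fun j => by
    dsimp only [T]; split_ifs
    exacts [le_rfl, div_nonneg (he.pos j).le hS0.le]
  have hTle : ∀ j, T j ≤ ρ j / S := fun j => by
    dsimp only [T]; split_ifs
    exacts [div_nonneg (he.pos j).le hS0.le, le_rfl]
  have hT1 : ∑ j, T j = 1 := by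
    rw [← Finset.sum_filter, ← Finset.sum_div, div_self hS0.ne']
  obtain ⟨ι, _, P, hP, hPT⟩ := he.realizable T hT0 hT1
  refine ⟨ι, inferInstance, P, S⁻¹, hP, inv_nonneg.2 hS0.le, inv_lt_one_of_one_lt₀ hS,
    fun l => ?_, fun l x hxD hxl => ?_⟩
  · obtain hs | ⟨j, hmap, hslope⟩ := hPT l
    · simpa [AffinePiece.gain, hs] using hS0.le
    · have hmax : max 1 ‖(e j).symm.toContinuousAffineMap.contLinear‖ ≤ (ρ j)⁻¹ :=
        max_le ((one_le_inv₀ (he.pos j)).2 (he.le_one j)) (he.norm_contLinear_symm_le j)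
      calc (P l).gain ≤ ρ j / S * (ρ j)⁻¹ := by
            rw [AffinePiece.gain, hmap, hslope]
            gcongr
            exacts [(hT0 j).trans (hTle j), hTle j]
        _ = S⁻¹ := by field_simp [(he.pos j).ne']
  · by_contra hs
    obtain ⟨j, hmap, hslope⟩ := (hPT l).resolve_left hs
    obtain ⟨y, hy, rfl⟩ := hP.carrier_subset l hs hxl
    have hTj : T j = 0 := if_neg (not_not.2 ⟨y, hy, hmap ▸ hxD⟩)
    exact hs (abs_eq_zero.1 (hslope.trans hTj))

theorem exists_contDiff [FiniteDimensional ℝ V] (hK : IsCompact K)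
    (he : IsCylinderFamily K D h e ρ) (hρ : 1 < ∑ j, ρ j) (hD : D.Finite) (hh : ContDiff ℝ 1 h)
    (hloc : ∀ x ∈ D, ∀ᶠ y in 𝓝 x, h y = h x) :
    ∃ f, ContDiff ℝ 1 f ∧ EqOn f h D ∧ ∀ x ∈ K, fderiv ℝ f x = 0 := by
  obtain ⟨n, hn⟩ := pow_unbounded_of_one_lt (1 + D.ncard : ℝ) hρ
  obtain ⟨J', _, e', ρ', he', hsum⟩ := he.exists_pow hK n
  obtain ⟨ι, _, P, θ, hP, hθ0, hθ1, hθ, hflat⟩ :=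
    he'.exists_contracting_system hD (hsum ▸ hn)
  exact hP.exists_contDiff hD.isClosed hh hloc hflat hθ0 hθ hθ1

end IsCylinderFamily

end SelfAffineSystems

theorem exists_continuousAffineEquiv_of_dist_eq {V : Type*} [NormedAddCommGroup V]
    [NormedSpace ℝ V] [StrictConvexSpace ℝ V] [FiniteDimensional ℝ V] {f : V → V} {r : ℝ}
    (hr : 0 < r) (hf : ∀ x y, dist (f x) (f y) = r * dist x y) :
    ∃ e : V ≃ᴬ[ℝ] V, ⇑e = f := by
  have hiso : Isometry fun x => r⁻¹ • f x := Isometry.of_dist_eq fun x y => by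
    rw [dist_smul₀, hf, Real.norm_of_nonneg (inv_nonneg.2 hr.le), inv_mul_cancel_left₀ hr.ne']
  let _ : Inhabited V := ⟨0⟩
  let scaling : V ≃L[ℝ] V := .smulLeft (Units.mk0 r hr.ne')
  let e : V ≃ᴬ[ℝ] V :=
    (hiso.affineIsometryOfStrictConvexSpace.toAffineIsometryEquiv rfl).toContinuousAffineEquiv
  exact ⟨e.trans scaling.toContinuousAffineEquiv, funext fun x => smul_inv_smul₀ hr.ne' (f x)⟩

theorem exists_contDiff_eq_zero_eq_one {V : Type*} [NormedAddCommGroup V] [NormedSpace ℝ V]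
    [FiniteDimensional ℝ V] {a b : V} (hab : a ≠ b) :
    ∃ h : V → ℝ, ContDiff ℝ 1 h ∧ h a = 0 ∧ h b = 1 ∧
      ∀ x ∈ ({a, b} : Set V), ∀ᶠ y in 𝓝 x, h y = h x := by
  obtain ⟨h, h0, h1, -⟩ := exists_contMDiffMap_zero_one_nhds_of_isClosed 𝓘(ℝ, V) (n := 1)
    (isClosed_singleton (x := a)) (isClosed_singleton (x := b)) (disjoint_singleton.2 hab)
  rw [nhdsSet_singleton] at h0 h1
  have ha := h0.self_of_nhds
  have hb := h1.self_of_nhds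
  refine ⟨h, h.contMDiff.contDiff, ha, hb, ?_⟩
  rintro x (rfl | rfl)
  exacts [h0.mono fun y hy => hy.trans ha.symm, h1.mono fun y hy => hy.trans hb.symm]

section Connectedness

theorem eq_of_mem_iUnion_chain {X Y : Type*} {k : ℕ} {A : Fin k → Set X} {f : X → Y}
    (hA : ∀ ℓ ℓ' : Fin k, (ℓ : ℕ) + 1 = ℓ' → (A ℓ ∩ A ℓ').Nonempty)
    (hf : ∀ ℓ, ∀ x ∈ A ℓ, ∀ y ∈ A ℓ, f x = f y) :
    ∀ x ∈ ⋃ ℓ, A ℓ, ∀ y ∈ ⋃ ℓ, A ℓ, f x = f y := by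
  have hle (m n : ℕ) (hmn : m ≤ n) (hn : n < k) :
      ∀ x ∈ A ⟨m, hmn.trans_lt hn⟩, ∀ y ∈ A ⟨n, hn⟩, f x = f y := by
    induction n, hmn using Nat.le_induction with
    | base => exact hf _
    | succ n hmn ih =>
      intro x hx y hy
      obtain ⟨z, hz, hz'⟩ := hA ⟨n, by omega⟩ ⟨n + 1, hn⟩ rfl
      exact (ih (by omega) x hx z hz).trans (hf _ z hz' y hy)
  intro x hx y hy
  obtain ⟨ℓ, hℓ⟩ := mem_iUnion.1 hx
  obtain ⟨ℓ', hℓ'⟩ := mem_iUnion.1 hy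
  obtain h | h := le_total ℓ ℓ'
  · exact hle ℓ ℓ' h ℓ'.2 x hℓ y hℓ'
  · exact (hle ℓ' ℓ h ℓ.2 y hℓ' x hℓ).symm

variable {X : Type*} [PseudoMetricSpace X] {K : Set X}

theorem exists_pos_forall_dist_lt_eq (hK : IsCompact K) {f : X → Bool} (hf : ContinuousOn f K) :
    ∃ ε > 0, ∀ x ∈ K, ∀ y ∈ K, dist x y < ε → f x = f y := by
  have huc : ∀ᶠ z in uniformity X ⊓ Filter.principal (K ×ˢ K), (f z.1, f z.2) ∈ SetRel.id :=
    hK.uniformContinuousOn_of_continuous hf (DiscreteUniformity.relId_mem_uniformity Bool)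
  rw [Filter.eventually_inf_principal] at huc
  obtain ⟨ε, hε, h⟩ := Metric.mem_uniformity_dist.1 huc
  exact ⟨ε, hε, fun x hx y hy hxy => h hxy ⟨hx, hy⟩⟩

theorem isPreconnected_of_isPreconnected_or_eq_image {ι : Type*} {A : ι → Set X} {θ : NNReal}
    (hθ : θ < 1) (hK : IsCompact K) (hAK : ∀ ℓ, A ℓ ⊆ K)
    (hA : ∀ ℓ, IsPreconnected (A ℓ) ∨ ∃ g : X → X, LipschitzWith θ g ∧ A ℓ = g '' K)
    (hchain : ∀ f : X → Bool, (∀ ℓ, ∀ x ∈ A ℓ, ∀ y ∈ A ℓ, f x = f y) →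
      ∀ x ∈ K, ∀ y ∈ K, f x = f y) :
    IsPreconnected K := by
  have hscale (n : ℕ) : ∀ f : X → Bool, ContinuousOn f K →
      (∀ x ∈ K, ∀ y ∈ K, dist x y ≤ θ ^ n * Metric.diam K → f x = f y) →
      ∀ x ∈ K, ∀ y ∈ K, f x = f y := by
    induction n with
    | zero =>
      intro f _ hf x hx y hy
      exact hf x hx y hy (by simpa using Metric.dist_le_diam_of_mem hK.isBounded hx hy)
    | succ n ih =>
      refine fun f hfc hf => hchain f fun ℓ => ?_
      obtain hℓ | ⟨g, hg, hgK⟩ := hA ℓ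
      · exact fun x hx y hy => hℓ.constant (hfc.mono (hAK ℓ)) hx hy
      · have hmaps : MapsTo g K K := fun x hx => hAK ℓ (hgK ▸ mem_image_of_mem g hx)
        rw [hgK]
        rintro _ ⟨x, hx, rfl⟩ _ ⟨y, hy, rfl⟩
        refine ih (f ∘ g) (hfc.comp hg.continuous.continuousOn hmaps) ?_ x hx y hy
        intro x hx y hy hxy
        refine hf _ (hmaps hx) _ (hmaps hy) ((hg.dist_le_mul x y).trans ?_)
        rw [pow_succ', mul_assoc]
        gcongr
  refine isPreconnected_of_forall_constant fun f hf => ?_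
  obtain ⟨ε, hε, hfε⟩ := exists_pos_forall_dist_lt_eq hK hf
  have hlim := (tendsto_pow_atTop_nhds_zero_of_lt_one θ.2 hθ).mul_const (Metric.diam K)
  rw [zero_mul] at hlim
  obtain ⟨n, hn⟩ := (hlim.eventually_lt_const hε).exists
  exact hscale n f hf fun x hx y hy hxy => hfε x hx y hy (hxy.trans_lt hn)

end Connectedness

section SimilarityDimension

open scoped NNReal ENNReal

universe u

variable {X : Type*} {ι : Type u} [Fintype ι] {φ : ι → X → X} {c : ι → ℝ≥0} {E : Set X}

theorem ediam_image_rpow_le [PseudoEMetricSpace X] {f : X → X} {C : ℝ≥0} (hf : LipschitzWith C f)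
    (s : ℝ≥0) (t : Set X) :
    Metric.ediam (f '' t) ^ (s : ℝ) ≤ (C ^ (s : ℝ) : ℝ≥0) * Metric.ediam t ^ (s : ℝ) := by
  rw [ENNReal.coe_rpow_of_nonneg _ s.coe_nonneg, ← ENNReal.mul_rpow_of_nonneg _ _ s.coe_nonneg]
  exact ENNReal.rpow_le_rpow (hf.ediam_image_le t) s.coe_nonneg

theorem exists_cover_ediam_le [PseudoEMetricSpace X] (hφ : ∀ i, LipschitzWith (c i) (φ i))
    (hE : E ⊆ ⋃ i, φ i '' E) {s θ : ℝ≥0} (hs : ∑ i, c i ^ (s : ℝ) ≤ 1) (hθ : ∀ i, c i ≤ θ) (n : ℕ) :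
    ∃ (κ : Type u) (_ : Fintype κ) (t : κ → Set X), E ⊆ ⋃ j, t j ∧
      (∀ j, Metric.ediam (t j) ≤ θ ^ n * Metric.ediam E) ∧
      ∑ j, Metric.ediam (t j) ^ (s : ℝ) ≤ Metric.ediam E ^ (s : ℝ) := by
  induction n with
  | zero => exact ⟨PUnit, inferInstance, fun _ => E, (iUnion_const E).ge, by simp, by simp⟩
  | succ n ih =>
    obtain ⟨κ, _, t, hcov, hdiam, hsum⟩ := ih
    refine ⟨ι × κ, inferInstance, fun w => φ w.1 '' t w.2, fun x hx => ?_, fun w => ?_, ?_⟩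
    · obtain ⟨i, y, hy, rfl⟩ := mem_iUnion.1 (hE hx)
      obtain ⟨j, hj⟩ := mem_iUnion.1 (hcov hy)
      exact mem_iUnion.2 ⟨(i, j), mem_image_of_mem _ hj⟩
    · calc Metric.ediam (φ w.1 '' t w.2)
          ≤ c w.1 * Metric.ediam (t w.2) := (hφ w.1).ediam_image_le _
        _ ≤ θ * (θ ^ n * Metric.ediam E) := by gcongr; exacts [hθ _, hdiam _]
        _ = θ ^ (n + 1) * Metric.ediam E := by rw [pow_succ', mul_assoc]
    · calc ∑ w : ι × κ, Metric.ediam (φ w.1 '' t w.2) ^ (s : ℝ)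
          ≤ ∑ w : ι × κ, (c w.1 ^ (s : ℝ) : ℝ≥0) * Metric.ediam (t w.2) ^ (s : ℝ) :=
            Finset.sum_le_sum fun w _ => ediam_image_rpow_le (hφ w.1) s (t w.2)
        _ = (∑ i, c i ^ (s : ℝ) : ℝ≥0) * ∑ j, Metric.ediam (t j) ^ (s : ℝ) := by
            rw [ENNReal.ofNNReal_finsetSum, Fintype.sum_mul_sum, Fintype.sum_prod_type]
        _ ≤ 1 * Metric.ediam E ^ (s : ℝ) := by gcongr; exact_mod_cast hs
        _ = Metric.ediam E ^ (s : ℝ) := one_mul _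

theorem dimH_le_of_subset_iUnion_image [EMetricSpace X] (hφ : ∀ i, LipschitzWith (c i) (φ i))
    (hc : ∀ i, c i < 1) (hEfin : Metric.ediam E ≠ ⊤) (hE : E ⊆ ⋃ i, φ i '' E) {s : ℝ≥0}
    (hs : ∑ i, c i ^ (s : ℝ) ≤ 1) : dimH E ≤ s := by
  borelize X
  let θ := Finset.univ.sup c
  have hθ : θ < 1 := (Finset.sup_lt_iff zero_lt_one).2 fun i _ => hc i
  choose κ _ t hcov hdiam hsum using
    exists_cover_ediam_le hφ hE hs fun i => Finset.le_sup (Finset.mem_univ i)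
  have hlim : Filter.Tendsto (fun n : ℕ => (θ : ℝ≥0∞) ^ n * Metric.ediam E) .atTop (𝓝 0) := by
    simpa using ENNReal.Tendsto.mul_const
      (ENNReal.tendsto_pow_atTop_nhds_zero_of_lt_one (ENNReal.coe_lt_one_iff.2 hθ)) (.inr hEfin)
  have hmeas : μH[s] E ≤ Metric.ediam E ^ (s : ℝ) :=
    (Measure.hausdorffMeasure_le_liminf_sum s E _ hlim t (.of_forall hdiam) (.of_forall hcov)).trans
      (Filter.liminf_le_of_frequently_le' (Filter.Frequently.of_forall hsum))
  exact dimH_le_of_hausdorffMeasure_ne_top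
    (hmeas.trans_lt (ENNReal.rpow_lt_top_of_nonneg s.coe_nonneg hEfin)).ne

end SimilarityDimension

theorem one_lt_sum_of_one_lt_dimH {X ι : Type*} [MetricSpace X] [Fintype ι] {φ : ι → X → X}
    {ρ : ι → ℝ} {E : Set X} (hρ : ∀ i, ρ i ∈ Ioo 0 1)
    (hφ : ∀ i x y, dist (φ i x) (φ i y) ≤ ρ i * dist x y) (hEb : Bornology.IsBounded E)
    (hE : E ⊆ ⋃ i, φ i '' E) (hdim : 1 < dimH E) : 1 < ∑ i, ρ i := by
  by_contra! hsum
  let c (i : ι) : NNReal := ⟨ρ i, (hρ i).1.le⟩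
  have hc : ∑ i, c i ^ ((1 : NNReal) : ℝ) ≤ 1 := by
    rw [← NNReal.coe_le_coe]
    simp only [NNReal.coe_sum, NNReal.coe_one, NNReal.rpow_one]
    exact hsum
  exact hdim.not_ge <| dimH_le_of_subset_iUnion_image (s := 1)
    (fun i => LipschitzWith.of_dist_le_mul (K := c i) (hφ i)) (fun i => (hρ i).2)
    hEb.ediam_ne_top hE hc

section Zipper

local notation "𝔼" d => EuclideanSpace ℝ (Fin d)

variable {d k : ℕ} {K : Set (𝔼 d)} {a b : 𝔼 d} {A : Fin k → Set (𝔼 d)} {p q : Fin k → 𝔼 d}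
  {ℓ ℓ' : Fin k} {x : 𝔼 d}

namespace IsZipperDecomp

theorem isCompact (hz : IsZipperDecomp K a b A p q) : IsCompact K :=
  hz.1 ▸ isCompact_iUnion fun ℓ => (hz.2.1 ℓ).1

theorem carrier_subset (hz : IsZipperDecomp K a b A p q) (ℓ : Fin k) : A ℓ ⊆ K :=
  (hz.2.1 ℓ).2.1

theorem left_mem (hz : IsZipperDecomp K a b A p q) (ℓ : Fin k) : p ℓ ∈ A ℓ :=
  (hz.2.1 ℓ).2.2.1

theorem right_mem (hz : IsZipperDecomp K a b A p q) (ℓ : Fin k) : q ℓ ∈ A ℓ :=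
  (hz.2.1 ℓ).2.2.2

theorem right_eq_left (hz : IsZipperDecomp K a b A p q) (hℓ : (ℓ : ℕ) + 1 = ℓ') : q ℓ = p ℓ' :=
  (hz.2.2.2.2.1 ℓ ℓ' hℓ).1

theorem eq_of_mem_of_lt (hz : IsZipperDecomp K a b A p q) (hlt : ℓ < ℓ') (hx : x ∈ A ℓ)
    (hx' : x ∈ A ℓ') : (ℓ : ℕ) + 1 = ℓ' ∧ x = q ℓ ∧ x = p ℓ' := by
  have hadj : (ℓ : ℕ) + 1 = ℓ' := by
    by_contra hne
    have hdisj := hz.2.2.2.2.2 ℓ ℓ' (lt_of_le_of_ne hlt hne)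
    exact notMem_empty x (hdisj ▸ ⟨hx, hx'⟩)
  obtain ⟨hqp, z, hz'⟩ := hz.2.2.2.2.1 ℓ ℓ' hadj
  have hxz : x = z := mem_singleton_iff.1 (hz' ▸ ⟨hx, hx'⟩)
  have hqz : q ℓ = z := mem_singleton_iff.1 (hz' ▸ ⟨hz.right_mem ℓ, hqp ▸ hz.left_mem ℓ'⟩)
  exact ⟨hadj, hxz.trans hqz.symm, (hxz.trans hqz.symm).trans hqp⟩

theorem start_mem (hz : IsZipperDecomp K a b A p q) (hk : 0 < k) : a ∈ A ⟨0, hk⟩ :=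
  hz.2.2.1 ⟨0, hk⟩ rfl ▸ hz.left_mem _

theorem end_mem (hz : IsZipperDecomp K a b A p q) (hk : 0 < k) :
    b ∈ A ⟨k - 1, Nat.sub_one_lt_of_lt hk⟩ :=
  hz.2.2.2.1 ⟨k - 1, Nat.sub_one_lt_of_lt hk⟩ rfl ▸ hz.right_mem _

theorem of_start_mem (hz : IsZipperDecomp K a b A p q) (ha : a ∈ A ℓ) :
    p ℓ = a ∧ (ℓ : ℕ) ≤ 1 := by
  obtain h0 | h0 := Nat.eq_zero_or_pos ℓ
  · exact ⟨hz.2.2.1 ℓ h0, h0.trans_le zero_le_one⟩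
  · obtain ⟨h1, -, hap⟩ := hz.eq_of_mem_of_lt h0 (hz.start_mem ℓ.pos) ha
    exact ⟨hap.symm, h1.ge⟩

theorem of_end_mem (hz : IsZipperDecomp K a b A p q) (hb : b ∈ A ℓ) :
    q ℓ = b ∧ k - 1 ≤ (ℓ : ℕ) + 1 := by
  obtain hk | hk := (Nat.le_sub_one_of_lt ℓ.2).eq_or_lt
  · exact ⟨hz.2.2.2.1 ℓ hk, hk ▸ Nat.le_succ _⟩
  · obtain ⟨h1, hbq, -⟩ := hz.eq_of_mem_of_lt hk hb (hz.end_mem ℓ.pos)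
    exact ⟨hbq.symm, h1.ge⟩

theorem start_ne_end (hz : IsZipperDecomp K a b A p q) (hk : 3 ≤ k) : a ≠ b := fun hab => by
  have : k - 1 ≤ 1 := (hz.of_start_mem (hab ▸ hz.end_mem (by omega))).2
  omega

end IsZipperDecomp

/-- A zipper decomposition of `K` whose buttons at the interior positions `pos i` are the images
of the button `(K, {a, b})` under the maps `φ i`. -/
structure IsSelfSimilarZipper {J : Type*} (K : Set (𝔼 d)) (a b : 𝔼 d) (A : Fin k → Set (𝔼 d))
    (p q : Fin k → 𝔼 d) (φ : J → (𝔼 d) → 𝔼 d) (pos : J ↪ Fin k) : Prop where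
  zipper : IsZipperDecomp K a b A p q
  carrier_eq : ∀ i, A (pos i) = φ i '' K
  ends_eq : ∀ i, ({p (pos i), q (pos i)} : Set (𝔼 d)) = {φ i a, φ i b}
  pos_ne_first : ∀ i, (pos i : ℕ) ≠ 0
  pos_ne_last : ∀ i, (pos i : ℕ) ≠ k - 1

namespace IsSelfSimilarZipper

variable {J : Type} {φ : J → (𝔼 d) → 𝔼 d} {pos : J ↪ Fin k}

theorem map_mem (hz : IsSelfSimilarZipper K a b A p q φ pos) (i : J) (hx : x ∈ K) :
    φ i x ∈ A (pos i) :=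
  hz.carrier_eq i ▸ mem_image_of_mem _ hx

theorem eq_of_map_eq (hz : IsSelfSimilarZipper K a b A p q φ pos) {i i' : J} {y y' : 𝔼 d}
    (hy : y ∈ K) (hy' : y' ∈ K) (heq : φ i y = φ i' y') (hend : φ i y ∈ ({a, b} : Set (𝔼 d))) :
    i = i' := by
  have hpos : (pos i : ℕ) = pos i' := by
    have hi := hz.map_mem i hy
    have hi' := hz.map_mem i' hy'
    have := hz.pos_ne_first i
    have := hz.pos_ne_first i'
    have := hz.pos_ne_last i
    have := hz.pos_ne_last i'
    obtain ha | hb := hend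
    · have := (hz.zipper.of_start_mem (ha ▸ hi)).2
      have := (hz.zipper.of_start_mem ((heq.symm.trans ha) ▸ hi')).2
      omega
    · have := (hz.zipper.of_end_mem (hb ▸ hi)).2
      have := (hz.zipper.of_end_mem ((heq.symm.trans hb) ▸ hi')).2
      have := (pos i).2
      have := (pos i').2
      omega
  exact pos.injective (Fin.ext hpos)

theorem mem_of_map_mem (hz : IsSelfSimilarZipper K a b A p q φ pos) {i : J} {y : 𝔼 d}
    (hφ : Function.Injective (φ i)) (hy : y ∈ K) (hend : φ i y ∈ ({a, b} : Set (𝔼 d))) :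
    y ∈ ({a, b} : Set (𝔼 d)) := by
  have hmem : φ i y ∈ ({p (pos i), q (pos i)} : Set (𝔼 d)) := by
    obtain ha | hb := hend
    · exact .inl (ha.trans (hz.zipper.of_start_mem (ha ▸ hz.map_mem i hy)).1.symm)
    · exact .inr (hb.trans (hz.zipper.of_end_mem (hb ▸ hz.map_mem i hy)).1.symm)
  rw [hz.ends_eq i] at hmem
  exact hmem.imp (hφ ·) (hφ ·)

end IsSelfSimilarZipper

section Height

variable {J : Type*} [Fintype J]

/-- The height at the start of the `n`-th button of a function that climbs by `T i` along the
button at position `pos i` and is constant on the other buttons. -/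
def zipperHeight (pos : J ↪ Fin k) (T : J → ℝ) (n : ℕ) : ℝ :=
  ∑ i, if (pos i : ℕ) < n then T i else 0

variable {pos : J ↪ Fin k} {T : J → ℝ}

theorem zipperHeight_zero : zipperHeight pos T 0 = 0 := by simp [zipperHeight]

theorem zipperHeight_eq_sum_of_le {n : ℕ} (hn : k ≤ n) : zipperHeight pos T n = ∑ i, T i :=
  Finset.sum_congr rfl fun i _ => if_pos ((pos i).2.trans_le hn)

theorem zipperHeight_succ (n : ℕ) :
    zipperHeight pos T (n + 1) =
      zipperHeight pos T n + ∑ i, if (pos i : ℕ) = n then T i else 0 := by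
  rw [zipperHeight, zipperHeight, ← Finset.sum_add_distrib]
  refine Finset.sum_congr rfl fun i _ => ?_
  split_ifs <;> first | omega | simp

theorem zipperHeight_succ_of_notMem_range {n : ℕ} (hn : ∀ i, (pos i : ℕ) ≠ n) :
    zipperHeight pos T (n + 1) = zipperHeight pos T n := by
  simp [zipperHeight_succ, hn]

theorem zipperHeight_pos_succ (i : J) :
    zipperHeight pos T (pos i + 1) = zipperHeight pos T (pos i) + T i := by
  classical
  have hpos (i' : J) : (pos i' : ℕ) = pos i ↔ i' = i := Fin.val_inj.trans pos.injective.eq_iff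
  simp [zipperHeight_succ, hpos]

end Height

namespace IsSelfSimilarZipper

variable {J : Type} [Fintype J] {e : J → (𝔼 d) ≃ᴬ[ℝ] (𝔼 d)} {pos : J ↪ Fin k} {h : (𝔼 d) → ℝ}
  {T : J → ℝ}

theorem exists_affinePiece (hz : IsSelfSimilarZipper K a b A p q (fun i => ⇑(e i)) pos)
    (ha : h a = 0) (hb : h b = 1) (hT : ∀ i, 0 ≤ T i) (ℓ : Fin k) :
    ∃ Q : AffinePiece (𝔼 d), Q.carrier = A ℓ ∧ (Q.slope ≠ 0 → Q.carrier ⊆ Q.map '' K) ∧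
      Q.HasValue {a, b} h (p ℓ) (zipperHeight pos T ℓ) ∧
      Q.HasValue {a, b} h (q ℓ) (zipperHeight pos T (ℓ + 1)) ∧
      (Q.slope = 0 ∨ ∃ i, Q.map = e i ∧ |Q.slope| = T i) := by
  by_cases hℓ : ∃ i, pos i = ℓ
  · obtain ⟨i, rfl⟩ := hℓ
    have hsub : A (pos i) ⊆ e i '' K := (hz.carrier_eq i).le
    obtain ⟨hp, hq⟩ | ⟨hp, hq⟩ := Set.pair_eq_pair_iff.1 (hz.ends_eq i)
    · refine ⟨⟨A (pos i), e i, zipperHeight pos T (pos i), T i⟩, rfl, fun _ => hsub,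
        .inr ⟨a, .inl rfl, hp.symm, ?_⟩, .inr ⟨b, .inr rfl, hq.symm, ?_⟩,
        .inr ⟨i, rfl, abs_of_nonneg (hT i)⟩⟩
      · simp [ha]
      · simp [hb, zipperHeight_pos_succ]
    · refine ⟨⟨A (pos i), e i, zipperHeight pos T (pos i + 1), -T i⟩, rfl, fun _ => hsub,
        .inr ⟨b, .inr rfl, hp.symm, ?_⟩, .inr ⟨a, .inl rfl, hq.symm, ?_⟩,
        .inr ⟨i, rfl, (abs_neg _).trans (abs_of_nonneg (hT i))⟩⟩
      · simp [hb, zipperHeight_pos_succ]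
      · simp [ha]
  · push Not at hℓ
    have hflat : zipperHeight pos T (ℓ + 1) = zipperHeight pos T ℓ :=
      zipperHeight_succ_of_notMem_range fun i hi => hℓ i (Fin.ext hi)
    exact ⟨⟨A ℓ, .refl ℝ _, zipperHeight pos T ℓ, 0⟩, rfl, fun h0 => absurd rfl h0,
      .inl ⟨rfl, rfl⟩, .inl ⟨rfl, hflat.symm⟩, .inl rfl⟩

theorem zipperHeight_eq_zero {φ : J → (𝔼 d) → 𝔼 d} {n : ℕ}
    (hz : IsSelfSimilarZipper K a b A p q φ pos) (hn : n ≤ 1) : zipperHeight pos T n = 0 := by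
  obtain rfl | rfl := Nat.le_one_iff_eq_zero_or_eq_one.1 hn
  · exact zipperHeight_zero
  · exact (zipperHeight_succ_of_notMem_range hz.pos_ne_first).trans zipperHeight_zero

theorem zipperHeight_eq_sum {φ : J → (𝔼 d) → 𝔼 d} {n : ℕ}
    (hz : IsSelfSimilarZipper K a b A p q φ pos) (hn : k - 1 ≤ n) :
    zipperHeight pos T n = ∑ i, T i := by
  obtain rfl | hlt := hn.eq_or_lt
  · rw [← zipperHeight_succ_of_notMem_range hz.pos_ne_last, zipperHeight_eq_sum_of_le (by omega)]
  · exact zipperHeight_eq_sum_of_le (by omega)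

theorem exists_isSelfAffineSystem
    (hz : IsSelfSimilarZipper K a b A p q (fun i => ⇑(e i)) pos)
    (ha : h a = 0) (hb : h b = 1) (hT : ∀ i, 0 ≤ T i) (hT1 : ∑ i, T i = 1) :
    ∃ P : Fin k → AffinePiece (𝔼 d), IsSelfAffineSystem K {a, b} h P ∧
      ∀ ℓ, (P ℓ).slope = 0 ∨ ∃ i, (P ℓ).map = e i ∧ |(P ℓ).slope| = T i := by
  choose P hcarrier hsub hleft hright hslope using hz.exists_affinePiece ha hb hT
  have hcompat {ℓ ℓ' : Fin k} {x : 𝔼 d} (hlt : ℓ < ℓ') (hx : x ∈ (P ℓ).carrier)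
      (hx' : x ∈ (P ℓ').carrier) :
      ∃ v, (P ℓ).HasValue {a, b} h x v ∧ (P ℓ').HasValue {a, b} h x v := by
    obtain ⟨hadj, rfl, hqp⟩ :=
      hz.zipper.eq_of_mem_of_lt hlt (hcarrier ℓ ▸ hx) (hcarrier ℓ' ▸ hx')
    exact ⟨_, hright ℓ, hqp ▸ hadj ▸ hleft ℓ'⟩
  refine ⟨P, ⟨?_, fun ℓ => hcarrier ℓ ▸ (hz.zipper.2.1 ℓ).1, hsub, fun ℓ ℓ' hne x hx hx' => ?_,
    fun ℓ x hx hxℓ => ?_⟩, hslope⟩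
  · simp only [hcarrier, ← hz.zipper.1]
  · obtain hlt | hlt := hne.lt_or_gt
    · exact hcompat hlt hx hx'
    · exact (hcompat hlt hx' hx).imp fun _ => And.symm
  · rw [hcarrier] at hxℓ
    obtain rfl | rfl := hx
    · obtain ⟨hp, hℓ⟩ := hz.zipper.of_start_mem hxℓ
      simpa only [hp, hz.zipperHeight_eq_zero hℓ, ha] using hleft ℓ
    · obtain ⟨hq, hℓ⟩ := hz.zipper.of_end_mem hxℓ
      simpa only [hq, hz.zipperHeight_eq_sum hℓ, hT1, hb] using hright ℓ

theorem isCylinderFamily {ρ : J → ℝ}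
    (hz : IsSelfSimilarZipper K a b A p q (fun i => ⇑(e i)) pos) (hρ : ∀ i, ρ i ∈ Ioo 0 1)
    (hdist : ∀ i x y, dist (e i x) (e i y) = ρ i * dist x y) (ha : h a = 0) (hb : h b = 1) :
    IsCylinderFamily K {a, b} h e ρ where
  pos i := (hρ i).1
  le_one i := (hρ i).2.le
  dist_map := hdist
  mapsTo i _ hx := hz.zipper.carrier_subset _ (hz.map_mem i hx)
  eq_of_map_eq _ _ _ hy _ hy' := hz.eq_of_map_eq hy hy'
  mem_of_map_mem i _ := hz.mem_of_map_mem (e i).injective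
  realizable T hT hT1 := by
    obtain ⟨P, hP, hslope⟩ := hz.exists_isSelfAffineSystem ha hb hT hT1
    exact ⟨Fin k, inferInstance, P, hP, hslope⟩

end IsSelfSimilarZipper

theorem IsSelfSimilarZipper.isPreconnected {J : Type*} [Finite J] {φ : J → (𝔼 d) → 𝔼 d} {ρ : J → ℝ}
    {pos : J ↪ Fin k} (hz : IsSelfSimilarZipper K a b A p q φ pos) (hρ : ∀ i, ρ i ∈ Ioo 0 1)
    (hφ : ∀ i x y, dist (φ i x) (φ i y) ≤ ρ i * dist x y)
    (hconn : ∀ ℓ ∉ range pos, IsPreconnected (A ℓ)) : IsPreconnected K := by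
  have := Fintype.ofFinite J
  let c (i : J) : NNReal := ⟨ρ i, (hρ i).1.le⟩
  have hθ : Finset.univ.sup c < 1 := (Finset.sup_lt_iff zero_lt_one).2 fun i _ => (hρ i).2
  refine isPreconnected_of_isPreconnected_or_eq_image hθ hz.zipper.isCompact
    hz.zipper.carrier_subset (fun ℓ => ?_) fun f hf => ?_
  · by_cases hℓ : ℓ ∈ range pos
    · obtain ⟨i, rfl⟩ := hℓ
      have hLip : LipschitzWith (c i) (φ i) := .of_dist_le_mul (hφ i)
      exact .inr ⟨φ i, hLip.weaken (Finset.le_sup (Finset.mem_univ i)), hz.carrier_eq i⟩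
    · exact .inl (hconn ℓ hℓ)
  · have hchain (ℓ ℓ' : Fin k) (h : (ℓ : ℕ) + 1 = ℓ') : (A ℓ ∩ A ℓ').Nonempty :=
      ⟨q ℓ, hz.zipper.right_mem ℓ, hz.zipper.right_eq_left h ▸ hz.zipper.left_mem ℓ'⟩
    have := eq_of_mem_iUnion_chain hchain hf
    rwa [← hz.zipper.1] at this

theorem whitney_of_linear_ifs_with_condensation_general {J : Type} [Fintype J]
    {φ : J → (𝔼 d) → 𝔼 d} {ρ : J → ℝ} {pos : J ↪ Fin k} (hρ : ∀ i, ρ i ∈ Ioo 0 1)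
    (hsim : ∀ i x y, dist (φ i x) (φ i y) = ρ i * dist x y)
    (hz : IsSelfSimilarZipper K a b A p q φ pos)
    (hconn : ∀ ℓ ∉ range pos, IsPreconnected (A ℓ)) (hsum : 1 < ∑ i, ρ i) :
    IsWhitneySet K := by
  have ⟨i⟩ : Nonempty J := not_isEmpty_iff.1 fun _ => by simp at hsum; linarith
  have hk : 3 ≤ k := by
    have := hz.pos_ne_first i
    have := hz.pos_ne_last i
    omega
  have haK := hz.zipper.carrier_subset _ (hz.zipper.start_mem (by omega))
  have hbK := hz.zipper.carrier_subset _ (hz.zipper.end_mem (by omega))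
  obtain ⟨h, hh, ha, hb, hloc⟩ := exists_contDiff_eq_zero_eq_one (hz.zipper.start_ne_end hk)
  have hpre := hz.isPreconnected hρ (fun i x y => (hsim i x y).le) hconn
  choose e he using fun i => exists_continuousAffineEquiv_of_dist_eq (hρ i).1 (hsim i)
  obtain rfl : (fun i => ⇑(e i)) = φ := funext he
  have hcyl := hz.isCylinderFamily hρ hsim ha hb
  obtain ⟨f, hf, hfh, hcrit⟩ :=
    hcyl.exists_contDiff hz.zipper.isCompact hsum (toFinite _) hh hloc
  refine ⟨hz.zipper.isCompact, ⟨⟨a, haK⟩, hpre⟩, f, hf, hcrit, fun hconst => ?_⟩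
  have hfab := hconst a haK b hbK
  rw [hfh (.inl rfl), hfh (.inr rfl), ha, hb] at hfab
  exact zero_ne_one hfab

section Rearrangement

variable {m N : ℕ} {φ : Fin N → (𝔼 d) → 𝔼 d} {C : Fin m → Set (𝔼 d)} {ca cb : Fin m → 𝔼 d}
  {σ : Fin k ≃ Fin m ⊕ Fin N}

/-- The positions of the buttons `φ i '' K` in the rearrangement `σ`. -/
def copyPosition (σ : Fin k ≃ Fin m ⊕ Fin N) : Fin N ↪ Fin k :=
  Function.Embedding.inr.trans σ.symm.toEmbedding

theorem copyPosition_ne {ℓ : Fin k} (hℓ : (σ ℓ).isLeft = true) (i : Fin N) :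
    copyPosition σ i ≠ ℓ := by
  rintro rfl
  simp [copyPosition] at hℓ

theorem isSelfSimilarZipper_of_rearrangement (hzip : IsZipperDecomp K a b A p q) (hk : 0 < k)
    (hrearr : ∀ ℓ, Sum.elim
      (fun j => A ℓ = C j ∧ ({p ℓ, q ℓ} : Set (𝔼 d)) = {ca j, cb j})
      (fun i => A ℓ = φ i '' K ∧ ({p ℓ, q ℓ} : Set (𝔼 d)) = {φ i a, φ i b}) (σ ℓ))
    (hfirst : (σ ⟨0, hk⟩).isLeft = true) (hlast : (σ ⟨k - 1, by omega⟩).isLeft = true) :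
    IsSelfSimilarZipper K a b A p q φ (copyPosition σ) := by
  have hcopy (i : Fin N) := hrearr (copyPosition σ i)
  simp only [copyPosition, Function.Embedding.trans_apply, Function.Embedding.inr_apply,
    Equiv.coe_toEmbedding, Equiv.apply_symm_apply, Sum.elim_inr] at hcopy
  exact ⟨hzip, fun i => (hcopy i).1, fun i => (hcopy i).2,
    fun i hi => copyPosition_ne hfirst i (Fin.ext hi),
    fun i hi => copyPosition_ne hlast i (Fin.ext hi)⟩

theorem isPreconnected_of_rearrangement (hC : ∀ j, IsPreconnected (C j))
    (hrearr : ∀ ℓ, Sum.elim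
      (fun j => A ℓ = C j ∧ ({p ℓ, q ℓ} : Set (𝔼 d)) = {ca j, cb j})
      (fun i => A ℓ = φ i '' K ∧ ({p ℓ, q ℓ} : Set (𝔼 d)) = {φ i a, φ i b}) (σ ℓ)) :
    ∀ ℓ ∉ range (copyPosition σ), IsPreconnected (A ℓ) := by
  intro ℓ hℓ
  have hbutton := hrearr ℓ
  cases hσ : σ ℓ with
  | inl j =>
    rw [hσ] at hbutton
    exact hbutton.1 ▸ hC j
  | inr i => exact absurd ⟨i, σ.symm_apply_eq.2 hσ.symm⟩ hℓ

end Rearrangement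

end Zipper

theorem whitney_of_linear_ifs_with_condensation
    (d N m : ℕ) (hm : 2 ≤ m)
    -- the contractive similitudes φ_1, …, φ_N
    (φ : Fin N → EuclideanSpace ℝ (Fin d) → EuclideanSpace ℝ (Fin d))
    (ρ : Fin N → ℝ) (hρ : ∀ i, ρ i ∈ Set.Ioo (0 : ℝ) 1)
    (hsim : ∀ i x y, dist (φ i x) (φ i y) = ρ i * dist x y)
    -- the condensation set C = C_1 ∪ ⋯ ∪ C_m, a disjoint union of nonempty
    -- compact connected sets
    (C : Fin m → Set (EuclideanSpace ℝ (Fin d)))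
    (hCcomp : ∀ j, IsCompact (C j)) (hCconn : ∀ j, IsConnected (C j))
    (hCdisj : Pairwise fun j j' => Disjoint (C j) (C j'))
    -- K is the attractor of the IFS with condensation {C; φ_1, …, φ_N}
    (K : Set (EuclideanSpace ℝ (Fin d)))
    (hKne : K.Nonempty) (hKcomp : IsCompact K)
    (hK : K = (⋃ j, C j) ∪ ⋃ i, φ i '' K)
    -- the endpoints a, b ∈ K and a_j, b_j ∈ C_j
    (a b : EuclideanSpace ℝ (Fin d)) (ha : a ∈ K) (hb : b ∈ K)
    (ca cb : Fin m → EuclideanSpace ℝ (Fin d))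
    (hca : ∀ j, ca j ∈ C j) (hcb : ∀ j, cb j ∈ C j)
    -- (K,{a,b}) = A_1 + ⋯ + A_{m+N} is a zipper decomposition, where the buttons
    -- A_ℓ are a rearrangement (via σ) of (C_j,{a_j,b_j}) and (φ_i(K),{φ_i(a),φ_i(b)})
    (A : Fin (m + N) → Set (EuclideanSpace ℝ (Fin d)))
    (p q : Fin (m + N) → EuclideanSpace ℝ (Fin d))
    (σ : Fin (m + N) ≃ (Fin m ⊕ Fin N))
    (hrearr : ∀ ℓ : Fin (m + N),
      Sum.elim
        (fun j => A ℓ = C j ∧ ({p ℓ, q ℓ} : Set (EuclideanSpace ℝ (Fin d))) = {ca j, cb j})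
        (fun i => A ℓ = φ i '' K ∧ ({p ℓ, q ℓ} : Set (EuclideanSpace ℝ (Fin d))) = {φ i a, φ i b})
        (σ ℓ))
    (hzip : IsZipperDecomp K a b A p q)
    -- (i): the first and last buttons are among the (C_j,{a_j,b_j})
    (hfirst : (σ ⟨0, by omega⟩).isLeft = true)
    (hlast : (σ ⟨m + N - 1, by omega⟩).isLeft = true)
    -- (ii): the attractor E of {φ_1, …, φ_N} has Hausdorff dimension > 1
    (E : Set (EuclideanSpace ℝ (Fin d)))
    (hEne : E.Nonempty) (hEcomp : IsCompact E)
    (hE : E = ⋃ i, φ i '' E)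
    (hdim : 1 < dimH E) :
    IsWhitneySet K := by
  have hposN : 0 < m + N := by omega
  have hz := isSelfSimilarZipper_of_rearrangement hzip hposN hrearr hfirst hlast
  have hconn := isPreconnected_of_rearrangement (fun j => (hCconn j).isPreconnected) hrearr
  have hsum : 1 < ∑ i, ρ i :=
    one_lt_sum_of_one_lt_dimH hρ (fun i x y => (hsim i x y).le) hEcomp.isBounded hE.le hdim
  exact whitney_of_linear_ifs_with_condensation_general hρ hsim hz hconn hsum
end
end

section
/- Let γ ⊆ ℝ^d be a self-similar arc, i.e. γ is the attractor of contractive similitudes φ_1, …, φ_N with ratios ρ_1, …, ρ_N ∈ (0,1) such that φ_i(γ) ∩ φ_j(γ) is a singleton when |i − j| = 1 and empty when |i − j| > 1. Then the Hausdorff dimension of γ equals the similarity dimension of {φ_1, …, φ_N}, i.e. dim_H γ = s where s is the unique positive real with Σ_{i=1}^N ρ_i^s = 1. (No open set condition is assumed.) -/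
open Set MeasureTheory

noncomputable section

/-- An arc in `ℝ^d`: a subset homeomorphic to `[0,1]`, realized as the image of a
continuous injection of `[0,1]` (automatically a homeomorphism onto its image). -/
def IsArc {d : ℕ} (γ : Set (EuclideanSpace ℝ (Fin d))) : Prop :=
  ∃ h : ℝ → EuclideanSpace ℝ (Fin d), ContinuousOn h (Set.Icc 0 1) ∧
    Set.InjOn h (Set.Icc 0 1) ∧ h '' Set.Icc 0 1 = γ

/-!
Let `V` be the arc without its endpoints. By invariance of domain on the line, every piece is a
neighbourhood, in the arc, of the image of each point of `V`; hence the similitudes map `V` into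
itself, and the images of `V` are pairwise disjoint since overlaps of pieces have empty interior.
This is the strong open set condition inside the arc, so Schief's argument applies: a small piece
`u(γ)` lies in `V`, so for every `n` the similitudes `φ_w ∘ u` with `|w| = n` have disjoint images.
For `t < s` and `n` large, the `t`-th powers of their ratios sum to at least `1`, and a separated
family of that kind forces `μH[t] γ > 0`.
-/

open Function Filter Topology Metric
open Dilation (ratio)
open scoped ENNReal NNReal

/-! ### Hausdorff measure of compact sets -/

section HausdorffMeasure

variable {X : Type*}

lemma exists_isOpen_superset_ediam_rpow_le [PseudoEMetricSpace X] (A : Set X) {t : ℝ} (ht : 0 < t)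
    {ε : ℝ≥0∞} (hε : ε ≠ 0) : ∃ U, IsOpen U ∧ A ⊆ U ∧ ediam U ^ t ≤ ediam A ^ t + ε := by
  by_cases hA : ediam A = ∞
  · exact ⟨univ, isOpen_univ, subset_univ A, by simp [hA, ENNReal.top_rpow_of_pos ht]⟩
  have hlim : Tendsto (fun η : ℝ≥0 ↦ (ediam A + 2 * η) ^ t) (𝓝[>] 0) (𝓝 (ediam A ^ t)) := by
    have hcont : Continuous fun η : ℝ≥0 ↦ (ediam A + ↑(2 * η)) ^ t := by fun_prop
    simpa using (hcont.tendsto 0).mono_left nhdsWithin_le_nhds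
  have hlt : ediam A ^ t < ediam A ^ t + ε :=
    ENNReal.lt_add_right (ENNReal.rpow_ne_top_of_nonneg ht.le hA) hε
  obtain ⟨η, hηlt, hη⟩ := ((hlim.eventually_lt_const hlt).and self_mem_nhdsWithin).exists
  exact ⟨thickening η A, isOpen_thickening, self_subset_thickening hη A,
    (ENNReal.rpow_le_rpow (ediam_thickening_le η) ht.le).trans hηlt.le⟩

lemma le_hausdorffMeasure_of_isCompact [EMetricSpace X] [MeasurableSpace X] [BorelSpace X]
    {K : Set X} (hK : IsCompact K) {t : ℝ} (ht : 0 < t) {c : ℝ≥0∞}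
    (hc : ∀ (F : Finset ℕ) (U : ℕ → Set X), (∀ i, IsOpen (U i)) → K ⊆ ⋃ i ∈ F, U i →
      c ≤ ∑ i ∈ F, ediam (U i) ^ t) :
    c ≤ Measure.hausdorffMeasure t K := by
  rw [Measure.hausdorffMeasure_apply]
  refine le_iSup₂_of_le ∞ ENNReal.zero_lt_top <| le_iInf₂ fun A hA ↦ le_iInf fun _ ↦
    ENNReal.le_of_forall_pos_le_add fun ε hε _ ↦ ?_
  obtain ⟨η, hη, hηε⟩ :=
    ENNReal.exists_pos_sum_of_countable' (ENNReal.coe_ne_zero.2 hε.ne') ℕ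
  choose U hUo hAU hU using fun n ↦
    exists_isOpen_superset_ediam_rpow_le (A n) ht (hη n).ne'
  obtain ⟨F, hF⟩ := hK.elim_finite_subcover U hUo (hA.trans (iUnion_mono hAU))
  calc c ≤ ∑ i ∈ F, ediam (U i) ^ t := hc F U hUo hF
    _ ≤ ∑' n, ediam (U n) ^ t := ENNReal.sum_le_tsum F
    _ ≤ ∑' n, (ediam (A n) ^ t + η n) := ENNReal.tsum_le_tsum hU
    _ = ∑' n, ediam (A n) ^ t + ∑' n, η n := ENNReal.tsum_add
    _ ≤ ∑' n, (⨆ _ : (A n).Nonempty, ediam (A n) ^ t) + ε := by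
      gcongr with n
      rcases (A n).eq_empty_or_nonempty with hn | hn <;> simp [hn, ht]

lemma exists_le_edist_of_pairwise_disjoint [EMetricSpace X] {κ : Type*} [Finite κ]
    {K : κ → Set X} (hK : ∀ k, IsCompact (K k)) (hdisj : Pairwise (Disjoint on K)) :
    ∃ δ : ℝ≥0∞, δ ≠ 0 ∧ Pairwise fun k l ↦ ∀ x ∈ K k, ∀ y ∈ K l, δ ≤ edist x y := by
  rcases isEmpty_or_nonempty κ with _ | _
  · exact ⟨1, one_ne_zero, fun k ↦ isEmptyElim k⟩
  have hpair (p : κ × κ) : ∃ δ : ℝ≥0∞, δ ≠ 0 ∧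
      (p.1 ≠ p.2 → ∀ x ∈ K p.1, ∀ y ∈ K p.2, δ ≤ edist x y) := by
    by_cases hp : p.1 = p.2
    · exact ⟨1, one_ne_zero, fun h ↦ absurd hp h⟩
    obtain ⟨δ, hδ, h⟩ :=
      exists_pos_forall_lt_edist (hK p.1) (hK p.2).isClosed (hdisj hp)
    exact ⟨δ, ENNReal.coe_ne_zero.2 hδ.ne', fun _ x hx y hy ↦ (h x hx y hy).le⟩
  choose δ hδ hsep using hpair
  obtain ⟨p, hp⟩ := Finite.exists_min δ
  exact ⟨δ p, hδ p, fun k l hkl x hx y hy ↦ (hp (k, l)).trans (hsep (k, l) hkl x hx y hy)⟩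

end HausdorffMeasure

/-! ### Separated families of dilations -/

section Separated

variable {X κ : Type*} [Fintype κ]

lemma ratio_mul_ediam_preimage_le [PseudoEMetricSpace X] {Y : Type*} [PseudoEMetricSpace Y]
    (f : X →ᵈ Y) (A : Set Y) : ratio f * ediam (f ⁻¹' A) ≤ ediam A :=
  (Dilation.ediam_image f _).symm.le.trans (ediam_mono (image_preimage_subset f A))

lemma ratio_rpow_mul_sum_ediam_preimage_rpow_le [PseudoEMetricSpace X] {Y : Type*}
    [PseudoEMetricSpace Y] (f : X →ᵈ Y) {t : ℝ} (ht : 0 ≤ t) {α : Type*} (F : Finset α)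
    (U : α → Set Y) :
    (ratio f : ℝ≥0∞) ^ t * ∑ i ∈ F, ediam (f ⁻¹' U i) ^ t ≤ ∑ i ∈ F, ediam (U i) ^ t := by
  simp only [Finset.mul_sum, ← ENNReal.mul_rpow_of_nonneg _ _ ht]
  gcongr
  exact ratio_mul_ediam_preimage_le f _

/-- If all sets of the cover are smaller than the gap `δ`, each of them meets the range of at most
one map, and the preimages under each single map form a strictly smaller cover. -/
lemma rpow_le_sum_ediam_rpow [PseudoEMetricSpace X] [Nonempty X] [Nontrivial κ] (ψ : κ → X →ᵈ X)
    {t : ℝ} (ht : 0 ≤ t) (hsum : 1 ≤ ∑ k, ratio (ψ k) ^ t) {δ : ℝ≥0∞}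
    (hδ : Pairwise fun k l ↦ ∀ x y, δ ≤ edist (ψ k x) (ψ l y)) {α : Type*} (F : Finset α)
    (U : α → Set X) (hU : ⋃ i ∈ F, U i = univ) : δ ^ t ≤ ∑ i ∈ F, ediam (U i) ^ t := by
  classical
  induction F using Finset.strongInduction generalizing U with
  | H F ih =>
  by_cases! hlarge : ∃ i ∈ F, δ ≤ ediam (U i)
  · obtain ⟨i, hi, hδi⟩ := hlarge
    exact (ENNReal.rpow_le_rpow hδi ht).trans
      (Finset.single_le_sum (f := fun i ↦ ediam (U i) ^ t) (fun _ _ ↦ zero_le) hi)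
  let G (k : κ) : Finset α := {i ∈ F | ∃ x, ψ k x ∈ U i}
  have hdisj : Pairwise (Disjoint on G) := fun k l hkl ↦ Finset.disjoint_left.2 fun i hk hl ↦ by
    obtain ⟨hi, x, hx⟩ := Finset.mem_filter.1 hk
    obtain ⟨-, y, hy⟩ := Finset.mem_filter.1 hl
    exact ((hδ hkl x y).trans (edist_le_ediam_of_mem hx hy)).not_gt (hlarge i hi)
  have hexists (k : κ) (x : X) : ∃ i ∈ G k, ψ k x ∈ U i := by
    obtain ⟨i, hi, hx⟩ := mem_iUnion₂.1 (hU.ge (mem_univ (ψ k x)))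
    exact ⟨i, Finset.mem_filter.2 ⟨hi, x, hx⟩, hx⟩
  have hssubset (k : κ) : G k ⊂ F := by
    obtain ⟨l, hl⟩ := exists_ne k
    obtain ⟨i, hi, -⟩ := hexists l (Classical.arbitrary X)
    exact (Finset.ssubset_iff_of_subset (Finset.filter_subset _ F)).2
      ⟨i, Finset.mem_of_mem_filter i hi, Finset.disjoint_left.1 (hdisj hl) hi⟩
  have hpiece (k : κ) : (ratio (ψ k) : ℝ≥0∞) ^ t * δ ^ t ≤ ∑ i ∈ G k, ediam (U i) ^ t :=
    (mul_le_mul_right (ih (G k) (hssubset k) _ <|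
      eq_univ_of_forall fun x ↦ by simpa using hexists k x) _).trans <|
    ratio_rpow_mul_sum_ediam_preimage_rpow_le (ψ k) ht (G k) U
  calc δ ^ t ≤ (∑ k, (ratio (ψ k) : ℝ≥0∞) ^ t) * δ ^ t :=
      le_mul_of_one_le_left zero_le <| by
        simpa only [ENNReal.coe_rpow_of_nonneg _ ht] using mod_cast hsum
    _ = ∑ k, (ratio (ψ k) : ℝ≥0∞) ^ t * δ ^ t := Finset.sum_mul ..
    _ ≤ ∑ k, ∑ i ∈ G k, ediam (U i) ^ t := Finset.sum_le_sum fun k _ ↦ hpiece k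
    _ = ∑ i ∈ Finset.univ.biUnion G, ediam (U i) ^ t :=
      (Finset.sum_biUnion fun k _ l _ hkl ↦ hdisj hkl).symm
    _ ≤ ∑ i ∈ F, ediam (U i) ^ t :=
      Finset.sum_le_sum_of_subset (Finset.biUnion_subset.2 fun k _ ↦ (hssubset k).1)

lemma le_dimH_univ_of_pairwise_disjoint_range [EMetricSpace X] [CompactSpace X] [Nonempty X]
    [Nontrivial κ] (ψ : κ → X →ᵈ X) (hdisj : Pairwise (Disjoint on fun k ↦ range (ψ k)))
    {t : ℝ≥0} (hsum : 1 ≤ ∑ k, ratio (ψ k) ^ (t : ℝ)) : t ≤ dimH (univ : Set X) := by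
  rcases eq_zero_or_pos t with rfl | ht
  · simp
  borelize X
  obtain ⟨δ, hδ, hsep⟩ := exists_le_edist_of_pairwise_disjoint
    (fun k ↦ isCompact_range (Dilation.toContinuous (ψ k))) hdisj
  have hδt : 0 < δ ^ (t : ℝ) := ENNReal.rpow_pos_of_nonneg (pos_iff_ne_zero.2 hδ) t.coe_nonneg
  refine le_dimH_of_hausdorffMeasure_ne_zero (hδt.trans_le ?_).ne'
  refine le_hausdorffMeasure_of_isCompact isCompact_univ ht fun F U _ hU ↦ ?_
  exact rpow_le_sum_ediam_rpow ψ t.coe_nonneg hsum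
    (fun k l hkl x y ↦ hsep hkl _ (mem_range_self x) _ (mem_range_self y)) F U
    (univ_subset_iff.1 hU)

end Separated

/-! ### Iterated function systems of dilations -/

section Words

variable {X ι : Type*}

lemma one_lt_sum_rpow_of_lt [Fintype ι] {a : ι → ℝ≥0} (ha₀ : ∀ i, 0 < a i)
    (ha₁ : ∀ i, a i < 1) {s t : ℝ} (hts : t < s) (hsum : ∑ i, a i ^ s = 1) :
    1 < ∑ i, a i ^ t := by
  have hne : (Finset.univ : Finset ι).Nonempty :=
    Finset.nonempty_of_sum_ne_zero (hsum.trans_ne one_ne_zero)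
  exact hsum.symm.trans_lt <| Finset.sum_lt_sum_of_nonempty hne fun i _ ↦
    NNReal.rpow_lt_rpow_of_exponent_gt (ha₀ i) (ha₁ i) hts

lemma nontrivial_of_one_lt_sum [Fintype ι] {a : ι → ℝ≥0} (ha : ∀ i, a i ≤ 1)
    (hsum : 1 < ∑ i, a i) : Nontrivial ι := by
  refine Fintype.one_lt_card_iff_nontrivial.1 (Nat.one_lt_cast (α := ℝ≥0).1 (hsum.trans_le ?_))
  simpa using Finset.sum_le_card_nsmul Finset.univ a 1 fun i _ ↦ ha i

/-- The composition `φ_{w 0} ∘ ⋯ ∘ φ_{w (n - 1)}` of an iterated function system along a word `w`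
of length `n`. -/
def wordMap [PseudoEMetricSpace X] (φ : ι → X →ᵈ X) {n : ℕ} (w : Fin n → ι) : X →ᵈ X :=
  (List.ofFn fun k ↦ φ (w k)).prod

/-- The condition on the set in the open set condition, without openness: the maps of the system
send `V` into itself, with pairwise disjoint images. -/
structure IsFeasible [PseudoEMetricSpace X] (φ : ι → X →ᵈ X) (V : Set X) : Prop where
  mapsTo : ∀ i, MapsTo (φ i) V V
  pairwise_disjoint : Pairwise (Disjoint on fun i ↦ φ i '' V)

section PseudoEMetricSpace

variable [PseudoEMetricSpace X] (φ : ι → X →ᵈ X)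

lemma wordMap_succ {n : ℕ} (w : Fin (n + 1) → ι) :
    wordMap φ w = φ (w 0) * wordMap φ (Fin.tail w) := by
  simp [wordMap, List.ofFn_succ, Fin.tail]

lemma ratio_wordMap {n : ℕ} (w : Fin n → ι) : ratio (wordMap φ w) = ∏ k, ratio (φ (w k)) := by
  rw [wordMap, ← List.prod_ofFn]
  exact (map_list_prod Dilation.ratioHom _).trans (by rw [List.map_ofFn]; rfl)

lemma sum_ratio_wordMap_rpow [Fintype ι] (n : ℕ) (t : ℝ) :
    ∑ w : Fin n → ι, ratio (wordMap φ w) ^ t = (∑ i, ratio (φ i) ^ t) ^ n := by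
  simp only [ratio_wordMap, ← NNReal.finsetProd_rpow, Fintype.sum_pow]

variable {φ}

lemma iUnion_range_wordMap (hcover : ⋃ i, range (φ i) = univ) (n : ℕ) :
    ⋃ w : Fin n → ι, range (wordMap φ w) = univ := by
  simp only [iUnion_eq_univ_iff, mem_range] at hcover ⊢
  induction n with
  | zero => exact fun x ↦ ⟨Fin.elim0, x, by simp [wordMap]⟩
  | succ n ih =>
    intro x
    obtain ⟨i, y, rfl⟩ := hcover x
    obtain ⟨w, z, rfl⟩ := ih y
    exact ⟨Fin.cons i w, z, by simp [wordMap_succ]⟩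

lemma exists_tendsto_ediam_range_wordMap_le [Finite ι] (hX : ediam (univ : Set X) ≠ ∞)
    (hratio : ∀ i, ratio (φ i) < 1) :
    ∃ r : ℕ → ℝ≥0∞, Tendsto r atTop (𝓝 0) ∧
      ∀ n (w : Fin n → ι), ediam (range (wordMap φ w)) ≤ r n := by
  have := Fintype.ofFinite ι
  let R : ℝ≥0 := Finset.univ.sup fun i ↦ ratio (φ i)
  have hR : R < 1 := (Finset.sup_lt_iff zero_lt_one).2 fun i _ ↦ hratio i
  refine ⟨fun n ↦ R ^ n * ediam (univ : Set X), ?_, fun n w ↦ ?_⟩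
  · simpa using ENNReal.Tendsto.mul_const
      (ENNReal.tendsto_pow_atTop_nhds_zero_of_lt_one (ENNReal.coe_lt_one_iff.2 hR)) (Or.inr hX)
  · have hle : ratio (wordMap φ w) ≤ R ^ n := by
      rw [ratio_wordMap]
      simpa using Finset.prod_le_pow_card Finset.univ (fun k ↦ ratio (φ (w k))) R
        fun k _ ↦ Finset.le_sup (f := fun i ↦ ratio (φ i)) (Finset.mem_univ (w k))
    simp only [Dilation.ediam_range]
    gcongr
    exact mod_cast hle

lemma exists_range_wordMap_subset [Finite ι] (hX : ediam (univ : Set X) ≠ ∞)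
    (hratio : ∀ i, ratio (φ i) < 1) (hcover : ⋃ i, range (φ i) = univ) {V : Set X} {x : X}
    (hV : V ∈ 𝓝 x) : ∃ (n : ℕ) (w : Fin n → ι), range (wordMap φ w) ⊆ V := by
  obtain ⟨ε, hε, hball⟩ := EMetric.mem_nhds_iff.1 hV
  obtain ⟨r, hr, hdiam⟩ := exists_tendsto_ediam_range_wordMap_le hX hratio
  obtain ⟨n, hn⟩ := (hr.eventually_lt_const hε).exists
  obtain ⟨w, hw⟩ := mem_iUnion.1 ((iUnion_range_wordMap hcover n).ge (mem_univ x))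
  exact ⟨n, w, fun y hy ↦
    hball (((edist_le_ediam_of_mem hy hw).trans (hdiam n w)).trans_lt hn)⟩

lemma IsFeasible.mapsTo_wordMap {V : Set X} (hV : IsFeasible φ V) {n : ℕ} (w : Fin n → ι) :
    MapsTo (wordMap φ w) V V := by
  induction n with
  | zero => simpa [wordMap] using mapsTo_id V
  | succ n ih =>
    rw [wordMap_succ]
    exact (hV.mapsTo (w 0)).comp (ih (Fin.tail w))

end PseudoEMetricSpace

variable [EMetricSpace X] {φ : ι → X →ᵈ X}

lemma IsFeasible.pairwise_disjoint_wordMap {V : Set X} (hV : IsFeasible φ V) (n : ℕ) :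
    Pairwise (Disjoint on fun w : Fin n → ι ↦ wordMap φ w '' V) := by
  induction n with
  | zero => exact fun w w' hne ↦ absurd (Subsingleton.elim w w') hne
  | succ n ih =>
    intro w w' hne
    simp only [onFun, wordMap_succ, Dilation.coe_mul, image_comp]
    by_cases h : w 0 = w' 0
    · have htail : Fin.tail w ≠ Fin.tail w' := fun htail ↦ hne <| by
        rw [← Fin.cons_self_tail w, ← Fin.cons_self_tail w', h, htail]
      rw [h]
      exact (disjoint_image_iff (Dilation.injective (φ (w' 0)))).2 (ih htail)
    · exact (hV.pairwise_disjoint h).mono (image_mono (hV.mapsTo_wordMap _).image_subset)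
        (image_mono (hV.mapsTo_wordMap _).image_subset)

lemma hausdorffMeasure_univ_le [Fintype ι] [MeasurableSpace X] [BorelSpace X]
    (hX : ediam (univ : Set X) ≠ ∞) (hratio : ∀ i, ratio (φ i) < 1)
    (hcover : ⋃ i, range (φ i) = univ) {s : ℝ} (hs : 0 ≤ s)
    (hsum : ∑ i, ratio (φ i) ^ s ≤ 1) :
    Measure.hausdorffMeasure s (univ : Set X) ≤ ediam (univ : Set X) ^ s := by
  obtain ⟨r, hr, hdiam⟩ := exists_tendsto_ediam_range_wordMap_le hX hratio
  have hlevel (n : ℕ) :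
      ∑ w : Fin n → ι, ediam (range (wordMap φ w)) ^ s ≤ ediam (univ : Set X) ^ s := by
    calc ∑ w : Fin n → ι, ediam (range (wordMap φ w)) ^ s
        = ↑(∑ w : Fin n → ι, ratio (wordMap φ w) ^ s) * ediam (univ : Set X) ^ s := by
          simp only [Dilation.ediam_range, ENNReal.mul_rpow_of_nonneg _ _ hs, ← Finset.sum_mul,
            ENNReal.ofNNReal_finsetSum, ENNReal.coe_rpow_of_nonneg _ hs]
      _ ≤ ediam (univ : Set X) ^ s := by
          rw [sum_ratio_wordMap_rpow]
          exact mul_le_of_le_one_left zero_le (mod_cast pow_le_one' hsum n)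
  refine (Measure.hausdorffMeasure_le_liminf_sum s univ r hr
    (fun n (w : Fin n → ι) ↦ range (wordMap φ w)) (.of_forall hdiam)
    (.of_forall fun n ↦ (iUnion_range_wordMap hcover n).ge)).trans ?_
  exact liminf_le_of_le (by isBoundedDefault) fun b hb ↦
    let ⟨n, hn⟩ := hb.exists; hn.trans (hlevel n)

lemma dimH_univ_le [Fintype ι] (hX : ediam (univ : Set X) ≠ ∞) (hratio : ∀ i, ratio (φ i) < 1)
    (hcover : ⋃ i, range (φ i) = univ) {s : ℝ≥0} (hsum : ∑ i, ratio (φ i) ^ (s : ℝ) ≤ 1) :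
    dimH (univ : Set X) ≤ s := by
  borelize X
  exact dimH_le_of_hausdorffMeasure_ne_top <|
    ne_top_of_le_ne_top (ENNReal.rpow_ne_top_of_nonneg s.coe_nonneg hX)
      (hausdorffMeasure_univ_le hX hratio hcover s.coe_nonneg hsum)

lemma IsFeasible.le_dimH_univ [CompactSpace X] [Fintype ι] {V : Set X} (hV : IsFeasible φ V)
    {x : X} (hx : V ∈ 𝓝 x) (hX : ediam (univ : Set X) ≠ ∞) (hratio : ∀ i, ratio (φ i) < 1)
    (hcover : ⋃ i, range (φ i) = univ) {t : ℝ≥0} (hsum : 1 < ∑ i, ratio (φ i) ^ (t : ℝ)) :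
    t ≤ dimH (univ : Set X) := by
  have : Nonempty X := ⟨x⟩
  have : Nontrivial ι :=
    nontrivial_of_one_lt_sum (fun i ↦ NNReal.rpow_le_one (hratio i).le t.coe_nonneg) hsum
  obtain ⟨m, u, hu⟩ := exists_range_wordMap_subset hX hratio hcover hx
  set q : ℝ≥0 := ratio (wordMap φ u) ^ (t : ℝ)
  have hq : 0 < q := NNReal.rpow_pos (Dilation.ratio_pos _)
  obtain ⟨n, hn⟩ := pow_unbounded_of_one_lt q⁻¹ hsum
  have hrange (w : Fin (n + 1) → ι) :
      range (wordMap φ w * wordMap φ u) ⊆ wordMap φ w '' V := by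
    rw [Dilation.coe_mul, range_comp]
    exact image_mono hu
  refine le_dimH_univ_of_pairwise_disjoint_range
    (fun w : Fin (n + 1) → ι ↦ wordMap φ w * wordMap φ u) (fun w w' hne ↦ ?_) ?_
  · exact (hV.pairwise_disjoint_wordMap (n + 1) hne).mono (hrange w) (hrange w')
  · calc 1 = q⁻¹ * q := (inv_mul_cancel₀ hq.ne').symm
      _ ≤ (∑ i, ratio (φ i) ^ (t : ℝ)) ^ (n + 1) * q := by
        gcongr
        exact hn.le.trans (pow_le_pow_right₀ hsum.le n.le_succ)
      _ = ∑ w : Fin (n + 1) → ι, ratio (wordMap φ w * wordMap φ u) ^ (t : ℝ) := by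
        simp only [Dilation.ratio_mul, NNReal.mul_rpow, ← Finset.sum_mul, sum_ratio_wordMap_rpow, q]

end Words

theorem IsFeasible.dimH_univ_eq {X ι : Type*} [MetricSpace X] [CompactSpace X] [Fintype ι]
    {φ : ι → X →ᵈ X} {V : Set X} (hV : IsFeasible φ V) (hV' : (interior V).Nonempty)
    (hratio : ∀ i, ratio (φ i) < 1) (hcover : ⋃ i, range (φ i) = univ) {s : ℝ≥0}
    (hsum : ∑ i, ratio (φ i) ^ (s : ℝ) = 1) : dimH (univ : Set X) = s := by
  obtain ⟨x, hx⟩ := hV'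
  have hX : ediam (univ : Set X) ≠ ∞ := isCompact_univ.isBounded.ediam_ne_top
  refine (dimH_univ_le hX hratio hcover hsum.le).antisymm <|
    ENNReal.le_of_forall_nnreal_lt fun t ht ↦ ?_
  exact hV.le_dimH_univ (mem_interior_iff_mem_nhds.1 hx) hX hratio hcover <|
    one_lt_sum_rpow_of_lt (fun i ↦ Dilation.ratio_pos _) hratio (mod_cast ht) hsum

/-! ### Self-maps of an arc -/

section Interval

variable {α : Type*} [ConditionallyCompleteLinearOrder α] [TopologicalSpace α] [OrderTopology α]
  [DenselyOrdered α]

lemma notMem_nhds_of_isTotallyDisconnected {s : Set α} (hs : IsTotallyDisconnected s) {a x : α}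
    (hax : a < x) : s ∉ 𝓝 x := by
  intro hmem
  obtain ⟨l, hl, hls⟩ := exists_Ioc_subset_of_mem_nhds hmem ⟨a, hax⟩
  obtain ⟨m, hlm, hmx⟩ := exists_between hl
  exact hmx.ne (hs _ hls isPreconnected_Ioc ⟨hlm, hmx.le⟩ ⟨hl, le_rfl⟩)

variable [BoundedOrder α] {f : α → α} {x : α}

lemma mem_Ioo_bot_top_of_injective (hf : Continuous f) (hinj : Injective f) (hx : x ∈ Ioo ⊥ ⊤) :
    f x ∈ Ioo ⊥ ⊤ := by
  rcases hf.strictMono_of_inj_boundedOrder' hinj with hmono | hanti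
  · exact ⟨bot_le.trans_lt (hmono hx.1), (hmono hx.2).trans_le le_top⟩
  · exact ⟨bot_le.trans_lt (hanti hx.2), (hanti hx.1).trans_le le_top⟩

lemma range_mem_nhds_of_injective (hf : Continuous f) (hinj : Injective f) (hx : x ∈ Ioo ⊥ ⊤) :
    range f ∈ 𝓝 (f x) := by
  rcases hf.strictMono_of_inj_boundedOrder' hinj with hmono | hanti
  · exact mem_of_superset (Icc_mem_nhds (hmono hx.1) (hmono hx.2))
      (intermediate_value_univ ⊥ ⊤ hf)
  · exact mem_of_superset (Icc_mem_nhds (hanti hx.2) (hanti hx.1))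
      (intermediate_value_univ ⊤ ⊥ hf)

variable {X : Type*}

lemma isFeasible_preimage_Ioo_bot_top {ι : Type*} [EMetricSpace X] (e : X ≃ₜ α) {φ : ι → X →ᵈ X}
    (hoverlap : Pairwise fun i j ↦ IsTotallyDisconnected (range (φ i) ∩ range (φ j))) :
    IsFeasible φ (e ⁻¹' Ioo ⊥ ⊤) := by
  let g (i : ι) : α → α := e ∘ φ i ∘ e.symm
  have hcont (i : ι) : Continuous (g i) :=
    e.continuous.comp ((Dilation.toContinuous (φ i)).comp e.symm.continuous)
  have hinj (i : ι) : Injective (g i) :=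
    e.injective.comp ((Dilation.injective (φ i)).comp e.symm.injective)
  have hrange (i : ι) : range (g i) = e '' range (φ i) := by
    rw [range_comp, e.symm.surjective.range_comp]
  have hmem (i : ι) {x : X} (hx : x ∈ e ⁻¹' Ioo ⊥ ⊤) :
      e (φ i x) ∈ Ioo ⊥ ⊤ ∧ e '' range (φ i) ∈ 𝓝 (e (φ i x)) := by
    have hx' : g i (e x) = e (φ i x) := by simp [g]
    rw [← hx', ← hrange]
    exact ⟨mem_Ioo_bot_top_of_injective (hcont i) (hinj i) hx,
      range_mem_nhds_of_injective (hcont i) (hinj i) hx⟩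
  refine ⟨fun i x hx ↦ (hmem i hx).1, fun i j hij ↦ disjoint_left.2 ?_⟩
  rintro _ ⟨x, hx, rfl⟩ ⟨y, hy, hxy⟩
  refine notMem_nhds_of_isTotallyDisconnected
    (e.isEmbedding.isTotallyDisconnected_image.2 (hoverlap hij)) (hmem i hx).1.1 ?_
  rw [image_inter e.injective]
  exact inter_mem (hmem i hx).2 (hxy ▸ (hmem j hy).2)

theorem dimH_univ_eq_of_homeomorph [Nontrivial α] {ι : Type*} [Fintype ι] [MetricSpace X]
    (e : X ≃ₜ α) {φ : ι → X →ᵈ X} (hratio : ∀ i, ratio (φ i) < 1) (hcover : ⋃ i, range (φ i) = univ)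
    (hoverlap : Pairwise fun i j ↦ IsTotallyDisconnected (range (φ i) ∩ range (φ j))) {s : ℝ≥0}
    (hsum : ∑ i, ratio (φ i) ^ (s : ℝ) = 1) : dimH (univ : Set X) = s := by
  have : CompactSpace α := ⟨Icc_bot_top (α := α) ▸ isCompact_Icc⟩
  have : CompactSpace X := e.symm.compactSpace
  have hopen : IsOpen (e ⁻¹' Ioo ⊥ ⊤) := isOpen_Ioo.preimage e.continuous
  refine (isFeasible_preimage_Ioo_bot_top e hoverlap).dimH_univ_eq ?_ hratio hcover hsum
  rw [hopen.interior_eq]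
  exact (nonempty_Ioo.2 bot_lt_top).preimage e.surjective

end Interval

/-! ### Self-similar arcs -/

section SelfSimilarArc

variable {X : Type*} [MetricSpace X]

lemma exists_dilation_of_dist_eq_mul [Nontrivial X] {f : X → X} {r : ℝ} (hr : 0 < r)
    (hf : ∀ x y, dist (f x) (f y) = r * dist x y) :
    ∃ g : X →ᵈ X, ⇑g = f ∧ (ratio g : ℝ) = r := by
  lift r to ℝ≥0 using hr.le
  let g : X →ᵈ X := Dilation.mkOfDistEq f ⟨r, (NNReal.coe_pos.1 hr).ne', hf⟩
  obtain ⟨x, y, hxy⟩ := exists_pair_ne X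
  exact ⟨g, rfl, congrArg _ (Dilation.ratio_unique_of_dist_ne_zero (dist_ne_zero.2 hxy)
    (hf x y)).symm⟩

theorem selfSimilarArc_dimH_eq_similarity_dimension_general {ι : Type*} [Fintype ι]
    {φ : ι → X → X} {ρ : ι → ℝ} (hρ : ∀ i, ρ i ∈ Ioo (0 : ℝ) 1) {γ : Set X}
    (hsim : ∀ i, ∀ x ∈ γ, ∀ y ∈ γ, dist (φ i x) (φ i y) = ρ i * dist x y)
    (hattr : γ = ⋃ i, φ i '' γ) (harc : Nonempty (γ ≃ₜ unitInterval))
    (hoverlap : Pairwise fun i j ↦ IsTotallyDisconnected (φ i '' γ ∩ φ j '' γ))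
    {s : ℝ} (hs : 0 < s) (hsum : ∑ i, ρ i ^ s = 1) : dimH γ = ENNReal.ofReal s := by
  obtain ⟨e⟩ := harc
  have : Nontrivial γ := e.toEquiv.nontrivial
  lift s to ℝ≥0 using hs.le
  have hmaps (i : ι) : MapsTo (φ i) γ γ := mapsTo_iff_image_subset.2 <|
    (subset_iUnion (fun i ↦ φ i '' γ) i).trans hattr.ge
  choose ψ hψ hratio using fun i ↦ exists_dilation_of_dist_eq_mul
    (f := (hmaps i).restrict) (hρ i).1 fun x y ↦ hsim i x x.2 y y.2
  have himage (i : ι) : Subtype.val '' range (ψ i) = φ i '' γ := by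
    rw [hψ, (hmaps i).range_restrict, Subtype.image_preimage_coe, inter_eq_right]
    exact (hmaps i).image_subset
  have hcover : ⋃ i, range (ψ i) = univ := by
    apply Subtype.val_injective.image_injective
    rw [image_iUnion, iUnion_congr himage, ← hattr, image_univ, Subtype.range_val]
  have hoverlap' : Pairwise fun i j ↦ IsTotallyDisconnected (range (ψ i) ∩ range (ψ j)) :=
    fun i j hij ↦ IsEmbedding.subtypeVal.isTotallyDisconnected_image.1 <| by
      rw [image_inter Subtype.val_injective, himage, himage]
      exact hoverlap hij
  have hdim : dimH (univ : Set γ) = s := dimH_univ_eq_of_homeomorph e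
    (fun i ↦ NNReal.coe_lt_one.1 (hratio i ▸ (hρ i).2)) hcover hoverlap'
    (NNReal.eq <| by simpa [hratio] using hsum)
  rw [← Subtype.range_val (s := γ), ← image_univ, isometry_subtype_coe.dimH_image, hdim,
    ENNReal.ofReal_coe_nnreal]

lemma IsArc.nonempty_homeomorph {d : ℕ} {γ : Set (EuclideanSpace ℝ (Fin d))} (hγ : IsArc γ) :
    Nonempty (γ ≃ₜ unitInterval) := by
  obtain ⟨h, hcont, hinj, rfl⟩ := hγ
  have hemb := (continuousOn_iff_continuous_domRestrict.1 hcont).isClosedEmbedding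
    (injOn_iff_injective.1 hinj)
  rw [← range_domRestrict]
  exact ⟨hemb.isEmbedding.toHomeomorph.symm⟩

lemma pairwise_isTotallyDisconnected_inter_of_chain {Y : Type*} [TopologicalSpace Y] {N : ℕ}
    {A : Fin N → Set Y}
    (hadj : ∀ i j : Fin N, (i : ℕ) + 1 = j → ∃ x, A i ∩ A j = {x})
    (hfar : ∀ i j : Fin N, (i : ℕ) + 1 < j → A i ∩ A j = ∅) :
    Pairwise fun i j ↦ IsTotallyDisconnected (A i ∩ A j) := by
  have hlt {i j : Fin N} (hij : i < j) : (A i ∩ A j).Subsingleton := by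
    rcases (Nat.succ_le_of_lt hij).eq_or_lt with heq | hlt
    · obtain ⟨x, hx⟩ := hadj i j heq
      exact hx ▸ subsingleton_singleton
    · exact hfar i j hlt ▸ subsingleton_empty
  rintro i j hij t ht -
  rcases hij.lt_or_gt with h | h
  · exact (hlt h).anti ht
  · exact (hlt h).anti (inter_comm (A i) _ ▸ ht)

end SelfSimilarArc

/-- For a self-similar arc, the Hausdorff dimension equals the similarity dimension
(no open set condition assumed). -/
theorem selfSimilarArc_dimH_eq_similarity_dimension
    (d N : ℕ)
    (φ : Fin N → EuclideanSpace ℝ (Fin d) → EuclideanSpace ℝ (Fin d))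
    (ρ : Fin N → ℝ) (hρ : ∀ i, ρ i ∈ Set.Ioo (0 : ℝ) 1)
    (hsim : ∀ i x y, dist (φ i x) (φ i y) = ρ i * dist x y)
    -- γ is the attractor of {φ_1, …, φ_N}
    (γ : Set (EuclideanSpace ℝ (Fin d)))
    (hγne : γ.Nonempty) (hγcomp : IsCompact γ)
    (hattr : γ = ⋃ i, φ i '' γ)
    -- γ is an arc
    (harc : IsArc γ)
    -- adjacent pieces meet in a single point, non-adjacent pieces are disjoint
    (hadj : ∀ i j : Fin N, (i : ℕ) + 1 = (j : ℕ) →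
      ∃ x, (φ i '' γ) ∩ (φ j '' γ) = {x})
    (hfar : ∀ i j : Fin N, (i : ℕ) + 1 < (j : ℕ) →
      (φ i '' γ) ∩ (φ j '' γ) = ∅)
    -- s is the similarity dimension: the unique s > 0 with Σ ρ_i ^ s = 1
    (s : ℝ) (hs : 0 < s) (hsum : ∑ i, ρ i ^ s = 1) :
    dimH γ = ENNReal.ofReal s := by
  exact selfSimilarArc_dimH_eq_similarity_dimension_general hρ (fun i x _ y _ ↦ hsim i x y) hattr
    harc.nonempty_homeomorph (pairwise_isTotallyDisconnected_inter_of_chain hadj hfar) hs hsum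
end
end

section
/- Let E ⊆ ℝ^d be compact and f : E → ℝ a function. Suppose that for every ε > 0 there exists δ > 0 such that for all x, y ∈ E with 0 < |x − y| < δ one has |f(x) − f(y)| / |x − y| < ε. Then there exists a C¹ function F : ℝ^d → ℝ such that F(x) = f(x) for all x ∈ E and the derivative of F vanishes at every point of E. -/
open Set

noncomputable section

/-!
The extension is a weighted average of nearby values of `f`, taken at a scale comparable to the
distance `δ` to `E`. Pick measurably a point `p y ∈ E` with `|y - p y| ≤ 2 δ(y)` for `y ∉ E`, and
average `f ∘ p` against the kernel `δ(y) φ((x - y) / δ(y))` with `φ` a bump function. Placing the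
radius at `y` instead of `x` means that `δ` is never differentiated, so no smoothing of the
distance function is needed; the factor `δ(y)` makes the `x`-derivative of the kernel bounded and
the kernel vanish for `y ∈ E`.

At `x ∉ E` only values of `f` at points of `E` within `O(δ(x))` of each other are averaged, so
flatness of `f` makes their oscillation `o(δ(x))`, while differentiating the average costs a
factor `O(1 / δ(x))`.
-/

open Metric Filter Topology MeasureTheory Module Asymptotics

section MollifierKernel

theorem le_add_dist_of_lipschitzWith_one {X : Type*} [PseudoMetricSpace X] {r : X → ℝ}
    (hr : LipschitzWith 1 r) (x y : X) : r x ≤ r y + dist x y := by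
  simpa using hr.le_add_mul x y

variable {V : Type*} [NormedAddCommGroup V] [NormedSpace ℝ V] [FiniteDimensional ℝ V]

/-- The bump function on `V`, equal to `1` for `‖u‖ ≤ 1/4` and to `0` for `‖u‖ ≥ 1/3`, from which
the averaging kernels are built. -/
def mollifierBump (V : Type*) [NormedAddCommGroup V] : ContDiffBump (0 : V) where
  rIn := 1 / 4
  rOut := 1 / 3
  rIn_pos := by norm_num
  rIn_lt_rOut := by norm_num

/-- The averaging kernel of variable radius `r`, the value `0` being taken where `r y = 0`.
The radius is taken at the integration variable `y`, not at the point `x` of evaluation. -/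
def mollifierKernel (r : V → ℝ) (x y : V) : ℝ :=
  r y * mollifierBump V ((r y)⁻¹ • (x - y))

/-- The derivative of `mollifierKernel r x y` in `x`. Where `r y = 0` the formula still gives `0`,
as the bump function is constant near `0`. -/
def mollifierKernelDeriv (r : V → ℝ) (x y : V) : V →L[ℝ] ℝ :=
  fderiv ℝ (mollifierBump V) ((r y)⁻¹ • (x - y))

theorem exists_norm_fderiv_mollifierBump_le (V : Type*) [NormedAddCommGroup V] [NormedSpace ℝ V]
    [FiniteDimensional ℝ V] : ∃ C, ∀ u, ‖fderiv ℝ (mollifierBump V) u‖ ≤ C :=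
  ((mollifierBump V).hasCompactSupport.fderiv ℝ).exists_bound_of_continuous
    ((mollifierBump V).contDiff.continuous_fderiv one_ne_zero)

variable {r : V → ℝ}

theorem hasFDerivAt_mollifierKernel (r : V → ℝ) (x y : V) :
    HasFDerivAt (mollifierKernel r · y) (mollifierKernelDeriv r x y) x := by
  rcases eq_or_ne (r y) 0 with hy | hy
  · have hderiv : fderiv ℝ (mollifierBump V) 0 = 0 := by
      rw [(mollifierBump V).eventuallyEq_one.fderiv_eq, fderiv_one, Pi.zero_apply]
    simpa only [mollifierKernel, mollifierKernelDeriv, hy, zero_mul, inv_zero, zero_smul, hderiv]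
      using hasFDerivAt_const (0 : ℝ) x
  · have hbump := ((mollifierBump V).contDiff.differentiable one_ne_zero
      ((r y)⁻¹ • (x - y))).hasFDerivAt
    have hinner := ((hasFDerivAt_id (𝕜 := ℝ) x).sub_const y).const_smul (r y)⁻¹
    refine ((hbump.comp x hinner).const_mul (r y)).congr_fderiv ?_
    ext v
    simp [mollifierKernelDeriv, hy]

theorem continuous_mollifierKernelDeriv (r : V → ℝ) (y : V) :
    Continuous (mollifierKernelDeriv r · y) :=
  ((mollifierBump V).contDiff.continuous_fderiv one_ne_zero).comp (by fun_prop)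

section Measurability

variable [MeasurableSpace V] [BorelSpace V]

theorem measurable_mollifierKernel (hr : Measurable r) (x : V) :
    Measurable (mollifierKernel r x) :=
  hr.mul ((mollifierBump V).continuous.measurable.comp (by fun_prop))

theorem measurable_mollifierKernelDeriv (hr : Measurable r) (x : V) :
    Measurable (mollifierKernelDeriv r x) :=
  ((mollifierBump V).contDiff.continuous_fderiv one_ne_zero).measurable.comp (by fun_prop)

end Measurability

theorem mollifierKernel_nonneg (hr₀ : 0 ≤ r) (x y : V) : 0 ≤ mollifierKernel r x y :=
  mul_nonneg (hr₀ y) (mollifierBump V).nonneg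

theorem mollifierKernel_le (hr₀ : 0 ≤ r) (x y : V) : mollifierKernel r x y ≤ r y :=
  mul_le_of_le_one_right (hr₀ y) (mollifierBump V).le_one

theorem mollifierKernel_eq_zero (hr : LipschitzWith 1 r) (hr₀ : 0 ≤ r) {x y : V}
    (hy : y ∉ ball x (r x / 2)) : mollifierKernel r x y = 0 := by
  rcases (show 0 ≤ r y from hr₀ y).eq_or_lt' with h | h
  · rw [mollifierKernel, h, zero_mul]
  · rw [mollifierKernel, (mollifierBump V).zero_of_le_dist, mul_zero]
    rw [dist_zero_right, norm_smul, norm_inv, Real.norm_of_nonneg h.le, ← dist_eq_norm,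
      le_inv_mul_iff₀ h, dist_comm]
    rw [mem_ball, not_lt] at hy
    simp only [mollifierBump]
    linarith [le_add_dist_of_lipschitzWith_one hr y x]

-- The nonnegative function `mollifierKernel r · y` has a minimum at each of its zeros.
theorem mollifierKernelDeriv_eq_zero (hr : LipschitzWith 1 r) (hr₀ : 0 ≤ r) {x y : V}
    (hy : y ∉ ball x (r x / 2)) : mollifierKernelDeriv r x y = 0 := by
  refine IsLocalMin.hasFDerivAt_eq_zero (Eventually.of_forall fun x' => ?_)
    (hasFDerivAt_mollifierKernel r x y)
  rw [mollifierKernel_eq_zero hr hr₀ hy]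
  exact mollifierKernel_nonneg hr₀ x' y

theorem le_mollifierKernel (hr : LipschitzWith 1 r) {x y : V} (hy : y ∈ ball x (r x / 5)) :
    4 / 5 * r x ≤ mollifierKernel r x y := by
  rw [mem_ball'] at hy
  have hxy := le_add_dist_of_lipschitzWith_one hr x y
  have hry : 0 < r y := by linarith [dist_nonneg (x := x) (y := y)]
  rw [mollifierKernel, (mollifierBump V).one_of_mem_closedBall, mul_one]
  · linarith
  · rw [mem_closedBall_zero_iff, norm_smul, norm_inv, Real.norm_of_nonneg hry.le,
      ← dist_eq_norm, inv_mul_le_iff₀ hry]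
    simp only [mollifierBump]
    linarith

variable {G : Type*} [NormedAddCommGroup G] [NormedSpace ℝ G]

theorem norm_mollifierKernel_smul_le (hr : LipschitzWith 1 r) (hr₀ : 0 ≤ r) (h : V → G)
    (x y : V) : ‖mollifierKernel r x y • h y‖ ≤
      (ball x (r x / 2)).indicator (fun y => 3 / 2 * r x * ‖h y‖) y := by
  by_cases hy : y ∈ ball x (r x / 2)
  · rw [indicator_of_mem hy, norm_smul, Real.norm_of_nonneg (mollifierKernel_nonneg hr₀ x y)]
    gcongr
    rw [mem_ball] at hy
    linarith [mollifierKernel_le hr₀ x y, le_add_dist_of_lipschitzWith_one hr y x]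
  · rw [indicator_of_notMem hy, mollifierKernel_eq_zero hr hr₀ hy, zero_smul, norm_zero]

theorem norm_mollifierKernelDeriv_smulRight_le (hr : LipschitzWith 1 r) (hr₀ : 0 ≤ r) {C : ℝ}
    (hC : ∀ u, ‖fderiv ℝ (mollifierBump V) u‖ ≤ C) (h : V → G) (x y : V) :
    ‖(mollifierKernelDeriv r x y).smulRight (h y)‖ ≤
      (ball x (r x / 2)).indicator (fun y => C * ‖h y‖) y := by
  by_cases hy : y ∈ ball x (r x / 2)
  · rw [indicator_of_mem hy, ContinuousLinearMap.norm_smulRight_apply]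
    gcongr
    exact hC _
  · rw [indicator_of_notMem hy, mollifierKernelDeriv_eq_zero hr hr₀ hy,
      ContinuousLinearMap.norm_smulRight_apply, norm_zero, zero_mul]

end MollifierKernel

section KernelIntegral

theorem integrable_indicator_ball_const_mul_norm {X G : Type*} [PseudoMetricSpace X] [ProperSpace X]
    [MeasurableSpace X] [OpensMeasurableSpace X] {ν : Measure X}
    [NormedAddCommGroup G] {g : X → G}
    (hg : LocallyIntegrable g ν) (x : X) (R c : ℝ) :
    Integrable ((ball x R).indicator fun y => c * ‖g y‖) ν :=
  IntegrableOn.integrable_indicator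
    (((hg.integrableOn_isCompact (isCompact_closedBall x R)).mono_set
      ball_subset_closedBall).norm.const_mul c) measurableSet_ball

variable {V : Type*} [NormedAddCommGroup V] [NormedSpace ℝ V] [FiniteDimensional ℝ V]
  [MeasurableSpace V] {μ : Measure V}
  {G : Type*} [NormedAddCommGroup G] [NormedSpace ℝ G] {r : V → ℝ} {h : V → G}

theorem norm_integral_mollifierKernelDeriv_smulRight_le [IsFiniteMeasureOnCompacts μ]
    (hr : LipschitzWith 1 r) (hr₀ : 0 ≤ r) {C : ℝ}
    (hC : ∀ u, ‖fderiv ℝ (mollifierBump V) u‖ ≤ C) {x : V} {s : ℝ}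
    (hs : ∀ y ∈ ball x (r x / 2), ‖h y‖ ≤ s) :
    ‖∫ y, (mollifierKernelDeriv r x y).smulRight (h y) ∂μ‖ ≤
      C * s * μ.real (ball x (r x / 2)) := by
  have hC₀ : 0 ≤ C := (norm_nonneg _).trans (hC 0)
  have hle := norm_mollifierKernelDeriv_smulRight_le hr hr₀ hC h x
  rw [← setIntegral_eq_integral_of_forall_compl_eq_zero (s := ball x (r x / 2)) fun y hy =>
    norm_le_zero_iff.1 ((hle y).trans_eq (indicator_of_notMem hy _))]
  refine norm_setIntegral_le_of_norm_le_const measure_ball_lt_top fun y hy => ?_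
  calc _ ≤ C * ‖h y‖ := (hle y).trans_eq (indicator_of_mem hy _)
    _ ≤ C * s := by gcongr; exact hs y hy

variable [BorelSpace V]

theorem integrable_mollifierKernel_smul (hr : LipschitzWith 1 r) (hr₀ : 0 ≤ r)
    (hh : LocallyIntegrable h μ) (x : V) : Integrable (fun y => mollifierKernel r x y • h y) μ :=
  (integrable_indicator_ball_const_mul_norm hh x (r x / 2) (3 / 2 * r x)).mono'
    ((measurable_mollifierKernel hr.continuous.measurable x).aestronglyMeasurable.smul
      hh.aestronglyMeasurable)
    (Eventually.of_forall (norm_mollifierKernel_smul_le hr hr₀ h x))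

theorem integrable_mollifierKernel [IsLocallyFiniteMeasure μ] (hr : LipschitzWith 1 r)
    (hr₀ : 0 ≤ r) (x : V) : Integrable (mollifierKernel r x) μ := by
  simpa using integrable_mollifierKernel_smul hr hr₀ (locallyIntegrable_const (μ := μ) (1 : ℝ)) x

theorem aestronglyMeasurable_mollifierKernelDeriv_smulRight (hr : Measurable r)
    (hh : AEStronglyMeasurable h μ) (x : V) :
    AEStronglyMeasurable (fun y => (mollifierKernelDeriv r x y).smulRight (h y)) μ :=
  (ContinuousLinearMap.smulRightL ℝ V G).aestronglyMeasurable_comp₂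
    (measurable_mollifierKernelDeriv hr x).aestronglyMeasurable hh

theorem exists_integrable_bound_mollifierKernelDeriv (hr : LipschitzWith 1 r) (hr₀ : 0 ≤ r)
    (hh : LocallyIntegrable h μ) (x₀ : V) :
    ∃ b : V → ℝ, Integrable b μ ∧
      ∀ y, ∀ x ∈ ball x₀ 1, ‖(mollifierKernelDeriv r x y).smulRight (h y)‖ ≤ b y := by
  obtain ⟨C, hC⟩ := exists_norm_fderiv_mollifierBump_le V
  have hC₀ : 0 ≤ C := (norm_nonneg _).trans (hC 0)
  refine ⟨_, integrable_indicator_ball_const_mul_norm hh x₀ (r x₀ / 2 + 2) C, fun y x hx =>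
    (norm_mollifierKernelDeriv_smulRight_le hr hr₀ hC h x y).trans ?_⟩
  refine indicator_le_indicator_of_subset (ball_subset_ball' ?_) (fun y => by positivity) y
  rw [mem_ball] at hx
  linarith [le_add_dist_of_lipschitzWith_one hr x x₀]

theorem hasFDerivAt_integral_mollifierKernel_smul (hr : LipschitzWith 1 r) (hr₀ : 0 ≤ r)
    (hh : LocallyIntegrable h μ) (x : V) :
    HasFDerivAt (fun x => ∫ y, mollifierKernel r x y • h y ∂μ)
      (∫ y, (mollifierKernelDeriv r x y).smulRight (h y) ∂μ) x := by
  obtain ⟨b, hb, hle⟩ := exists_integrable_bound_mollifierKernelDeriv hr hr₀ hh x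
  exact hasFDerivAt_integral_of_dominated_of_fderiv_le (ball_mem_nhds x one_pos)
    (Eventually.of_forall fun x =>
      (integrable_mollifierKernel_smul hr hr₀ hh x).aestronglyMeasurable)
    (integrable_mollifierKernel_smul hr hr₀ hh x)
    (aestronglyMeasurable_mollifierKernelDeriv_smulRight hr.continuous.measurable
      hh.aestronglyMeasurable x)
    (Eventually.of_forall hle) hb
    (Eventually.of_forall fun y x _ => (hasFDerivAt_mollifierKernel r x y).smul_const (h y))

theorem continuous_integral_mollifierKernelDeriv_smulRight (hr : LipschitzWith 1 r) (hr₀ : 0 ≤ r)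
    (hh : LocallyIntegrable h μ) :
    Continuous fun x => ∫ y, (mollifierKernelDeriv r x y).smulRight (h y) ∂μ := by
  refine continuous_iff_continuousAt.2 fun x => ?_
  obtain ⟨b, hb, hle⟩ := exists_integrable_bound_mollifierKernelDeriv hr hr₀ hh x
  refine continuousAt_of_dominated
    (Eventually.of_forall fun x => aestronglyMeasurable_mollifierKernelDeriv_smulRight
      hr.continuous.measurable hh.aestronglyMeasurable x)
    (eventually_of_mem (ball_mem_nhds x one_pos) fun x' hx' =>
      Eventually.of_forall fun y => hle y x' hx')
    hb (Eventually.of_forall fun y => ?_)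
  exact (((ContinuousLinearMap.smulRightL ℝ V G).flip (h y)).continuous.comp
    (continuous_mollifierKernelDeriv r y)).continuousAt

theorem contDiff_integral_mollifierKernel_smul (hr : LipschitzWith 1 r) (hr₀ : 0 ≤ r)
    (hh : LocallyIntegrable h μ) : ContDiff ℝ 1 fun x => ∫ y, mollifierKernel r x y • h y ∂μ :=
  contDiff_one_iff_hasFDerivAt.2
    ⟨_, continuous_integral_mollifierKernelDeriv_smulRight hr hr₀ hh,
      hasFDerivAt_integral_mollifierKernel_smul hr hr₀ hh⟩

theorem contDiff_integral_mollifierKernel [IsLocallyFiniteMeasure μ] (hr : LipschitzWith 1 r)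
    (hr₀ : 0 ≤ r) : ContDiff ℝ 1 fun x => ∫ y, mollifierKernel r x y ∂μ := by
  simpa using
    contDiff_integral_mollifierKernel_smul hr hr₀ (locallyIntegrable_const (μ := μ) (1 : ℝ))

theorem norm_integral_mollifierKernel_smul_le [IsLocallyFiniteMeasure μ] (hr : LipschitzWith 1 r)
    (hr₀ : 0 ≤ r) {x : V} {s : ℝ} (hs : ∀ y ∈ ball x (r x / 2), ‖h y‖ ≤ s) :
    ‖∫ y, mollifierKernel r x y • h y ∂μ‖ ≤ (∫ y, mollifierKernel r x y ∂μ) * s := by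
  rw [← integral_mul_const]
  refine norm_integral_le_of_norm_le ((integrable_mollifierKernel hr hr₀ x).mul_const s)
    (Eventually.of_forall fun y => ?_)
  by_cases hy : y ∈ ball x (r x / 2)
  · rw [norm_smul, Real.norm_of_nonneg (mollifierKernel_nonneg hr₀ x y)]
    exact mul_le_mul_of_nonneg_left (hs y hy) (mollifierKernel_nonneg hr₀ x y)
  · simp [mollifierKernel_eq_zero hr hr₀ hy]

theorem le_integral_mollifierKernel [IsLocallyFiniteMeasure μ] (hr : LipschitzWith 1 r)
    (hr₀ : 0 ≤ r) (x : V) :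
    4 / 5 * r x * μ.real (ball x (r x / 5)) ≤ ∫ y, mollifierKernel r x y ∂μ :=
  have hint := integrable_mollifierKernel (μ := μ) hr hr₀ x
  (setIntegral_ge_of_const_le_real measurableSet_ball measure_ball_lt_top.ne
    (fun _ hy => le_mollifierKernel hr hy) hint.integrableOn).trans
    (setIntegral_le_integral hint (Eventually.of_forall (mollifierKernel_nonneg hr₀ x)))

theorem integral_mollifierKernel_pos [IsLocallyFiniteMeasure μ] [μ.IsOpenPosMeasure]
    (hr : LipschitzWith 1 r) (hr₀ : 0 ≤ r) {x : V} (hx : 0 < r x) :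
    0 < ∫ y, mollifierKernel r x y ∂μ := by
  have hball : 0 < μ.real (ball x (r x / 5)) :=
    ENNReal.toReal_pos (measure_ball_pos μ x (by positivity)).ne' measure_ball_lt_top.ne
  exact lt_of_lt_of_le (by positivity) (le_integral_mollifierKernel hr hr₀ x)

theorem measureReal_ball_mul_of_pos (μ : Measure V) [μ.IsAddHaarMeasure] (x : V) {c : ℝ}
    (hc : 0 < c) (R : ℝ) : μ.real (ball x (c * R)) = c ^ finrank ℝ V * μ.real (ball x R) := by
  rw [Measure.real, Measure.addHaar_ball_mul_of_pos μ x hc, ENNReal.toReal_mul,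
    ENNReal.toReal_ofReal (by positivity), ← Measure.real, ← Measure.addHaar_real_ball_center μ x]

theorem mul_measureReal_ball_le_integral_mollifierKernel [μ.IsAddHaarMeasure]
    (hr : LipschitzWith 1 r) (hr₀ : 0 ≤ r) (x : V) :
    r x * μ.real (ball x (r x / 2)) ≤
      5 / 4 * (5 / 2) ^ finrank ℝ V * ∫ y, mollifierKernel r x y ∂μ := by
  have hball : r x / 2 = 5 / 2 * (r x / 5) := by ring
  rw [hball, measureReal_ball_mul_of_pos μ x (by norm_num)]
  calc r x * ((5 / 2) ^ finrank ℝ V * μ.real (ball x (r x / 5)))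
      = 5 / 4 * (5 / 2) ^ finrank ℝ V * (4 / 5 * r x * μ.real (ball x (r x / 5))) := by ring
    _ ≤ _ := by gcongr; exact le_integral_mollifierKernel hr hr₀ x

end KernelIntegral

section Mollification

variable {V : Type*} [NormedAddCommGroup V] [NormedSpace ℝ V] [FiniteDimensional ℝ V]
  [MeasurableSpace V] {G : Type*} [NormedAddCommGroup G] [NormedSpace ℝ G]

/-- The average of `h` against `mollifierKernel r x`, a mollification of `h` at scale `r x`.
It takes the junk value `0` where the kernel integrates to `0`. -/
def mollification (r : V → ℝ) (μ : Measure V) (h : V → G) (x : V) : G :=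
  (∫ y, mollifierKernel r x y ∂μ)⁻¹ • ∫ y, mollifierKernel r x y • h y ∂μ

variable [BorelSpace V] {μ : Measure V} {r : V → ℝ} {h : V → G}

theorem contDiffAt_mollification [IsLocallyFiniteMeasure μ] [μ.IsOpenPosMeasure]
    (hr : LipschitzWith 1 r) (hr₀ : 0 ≤ r) (hh : LocallyIntegrable h μ) {x : V} (hx : 0 < r x) :
    ContDiffAt ℝ 1 (mollification r μ h) x :=
  ((contDiff_integral_mollifierKernel hr hr₀).contDiffAt.inv
    (integral_mollifierKernel_pos hr hr₀ hx).ne').smul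
    (contDiff_integral_mollifierKernel_smul hr hr₀ hh).contDiffAt

variable [CompleteSpace G]

theorem mollification_sub_const [IsLocallyFiniteMeasure μ] [μ.IsOpenPosMeasure]
    (hr : LipschitzWith 1 r) (hr₀ : 0 ≤ r) (hh : LocallyIntegrable h μ) (c : G) {x : V}
    (hx : 0 < r x) : mollification r μ (fun y => h y - c) x = mollification r μ h x - c := by
  simp only [mollification, smul_sub]
  rw [integral_sub (integrable_mollifierKernel_smul hr hr₀ hh x)
    ((integrable_mollifierKernel hr hr₀ x).smul_const c), integral_smul_const, smul_sub,
    inv_smul_smul₀ (integral_mollifierKernel_pos hr hr₀ hx).ne']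

theorem norm_mollification_sub_le [IsLocallyFiniteMeasure μ] [μ.IsOpenPosMeasure]
    (hr : LipschitzWith 1 r) (hr₀ : 0 ≤ r) (hh : LocallyIntegrable h μ) {x : V} (hx : 0 < r x)
    {c : G} {s : ℝ} (hs : ∀ y ∈ ball x (r x / 2), ‖h y - c‖ ≤ s) :
    ‖mollification r μ h x - c‖ ≤ s := by
  have hpos := integral_mollifierKernel_pos (μ := μ) hr hr₀ hx
  rw [← mollification_sub_const hr hr₀ hh c hx, mollification, norm_smul, norm_inv,
    Real.norm_of_nonneg hpos.le, inv_mul_le_iff₀ hpos]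
  exact norm_integral_mollifierKernel_smul_le hr hr₀ hs

-- Subtracting the constant `mollification r μ h x` from `h` makes the numerator vanish at `x`,
-- so only its derivative survives in the quotient rule.
theorem fderiv_mollification [IsLocallyFiniteMeasure μ] [μ.IsOpenPosMeasure]
    (hr : LipschitzWith 1 r) (hr₀ : 0 ≤ r) (hh : LocallyIntegrable h μ) {x : V} (hx : 0 < r x) :
    fderiv ℝ (mollification r μ h) x = (∫ y, mollifierKernel r x y ∂μ)⁻¹ •
      ∫ y, (mollifierKernelDeriv r x y).smulRight (h y - mollification r μ h x) ∂μ := by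
  set c := mollification r μ h x with hc
  have hpos := integral_mollifierKernel_pos (μ := μ) hr hr₀ hx
  have hh' : LocallyIntegrable (fun y => h y - c) μ := hh.sub (locallyIntegrable_const c)
  have hnum : ∫ y, mollifierKernel r x y • (h y - c) ∂μ = 0 := by
    have := mollification_sub_const hr hr₀ hh c hx
    rwa [← hc, sub_self, mollification, smul_eq_zero_iff_right (inv_ne_zero hpos.ne')] at this
  have heq : (fun x' => mollification r μ h x' - c) =ᶠ[𝓝 x] mollification r μ fun y => h y - c :=
    (hr.continuous.continuousAt.eventually (lt_mem_nhds hx)).mono fun x' hx' =>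
      (mollification_sub_const hr hr₀ hh c hx').symm
  have hweight : HasFDerivAt (fun x => (∫ y, mollifierKernel r x y ∂μ)⁻¹) _ x :=
    (((contDiff_integral_mollifierKernel hr hr₀).contDiffAt.inv hpos.ne').differentiableAt
      one_ne_zero).hasFDerivAt
  have hderiv := hweight.smul (hasFDerivAt_integral_mollifierKernel_smul hr hr₀ hh' x)
  rw [hnum, ContinuousLinearMap.smulRight_zero, add_zero] at hderiv
  rw [← fderiv_sub_const c, heq.fderiv_eq]
  exact hderiv.fderiv

theorem norm_fderiv_mollification_le [μ.IsAddHaarMeasure] (hr : LipschitzWith 1 r) (hr₀ : 0 ≤ r)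
    (hh : LocallyIntegrable h μ) {C : ℝ} (hC : ∀ u, ‖fderiv ℝ (mollifierBump V) u‖ ≤ C)
    {x : V} (hx : 0 < r x) {c : G} {s : ℝ} (hs : ∀ y ∈ ball x (r x / 2), ‖h y - c‖ ≤ s) :
    ‖fderiv ℝ (mollification r μ h) x‖ ≤ 5 / 2 * (5 / 2) ^ finrank ℝ V * C * s / r x := by
  have hC₀ : 0 ≤ C := (norm_nonneg _).trans (hC 0)
  have hs₀ : 0 ≤ s := (norm_nonneg _).trans (hs x (mem_ball_self (by positivity)))
  have hpos := integral_mollifierKernel_pos (μ := μ) hr hr₀ hx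
  have hosc : ∀ y ∈ ball x (r x / 2), ‖h y - mollification r μ h x‖ ≤ 2 * s := fun y hy => by
    have := norm_mollification_sub_le hr hr₀ hh hx hs
    rw [norm_sub_rev] at this
    linarith [norm_sub_le_norm_sub_add_norm_sub (h y) c (mollification r μ h x), hs y hy]
  rw [fderiv_mollification hr hr₀ hh hx, norm_smul, norm_inv, Real.norm_of_nonneg hpos.le,
    inv_mul_le_iff₀ hpos, mul_div_assoc', le_div_iff₀ hx]
  calc ‖∫ y, (mollifierKernelDeriv r x y).smulRight (h y - mollification r μ h x) ∂μ‖ * r x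
      ≤ C * (2 * s) * μ.real (ball x (r x / 2)) * r x := by
        gcongr
        exact norm_integral_mollifierKernelDeriv_smulRight_le hr hr₀ hC hosc
    _ = C * (2 * s) * (r x * μ.real (ball x (r x / 2))) := by ring
    _ ≤ C * (2 * s) * (5 / 4 * (5 / 2) ^ finrank ℝ V * ∫ y, mollifierKernel r x y ∂μ) := by
        exact mul_le_mul_of_nonneg_left
          (mul_measureReal_ball_le_integral_mollifierKernel hr hr₀ x) (by positivity)
    _ = _ := by ring

end Mollification

section QuasiProjection

/-- A map to `E` whose value at a point off `E` is a nearest point of `E` up to a factor `2`. On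
`E` itself the value is only required to be within distance `1`, so that the map can be chosen
measurable with countable range. -/
structure IsQuasiProjection {X : Type*} [PseudoMetricSpace X] (E : Set X) (p : X → X) : Prop where
  mem : ∀ y, p y ∈ E
  dist_le : ∀ y ∉ E, dist y (p y) ≤ 2 * infDist y E
  dist_le_one : ∀ y ∈ E, dist y (p y) ≤ 1

theorem exists_stronglyMeasurable_comp_dist_lt {X Y : Type*} [PseudoMetricSpace X]
    [SecondCountableTopology X] [MeasurableSpace X] [OpensMeasurableSpace X] [TopologicalSpace Y]
    {E : Set X} (hne : E.Nonempty) {ρ : X → ℝ} (hρ : Measurable ρ)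
    (hlt : ∀ y, infDist y E < ρ y) (f : X → Y) :
    ∃ p : X → X, (∀ y, p y ∈ E) ∧ (∀ y, dist y (p y) < ρ y) ∧ StronglyMeasurable (f ∘ p) := by
  classical
  have := hne.to_subtype
  let z : ℕ → E := TopologicalSpace.denseSeq E
  have hex (y : X) : ∃ n, dist y (z n) < ρ y := by
    obtain ⟨w, hw, hyw⟩ := (infDist_lt_iff hne).1 (hlt y)
    have hopen : IsOpen {w : E | dist y w < ρ y} := isOpen_lt (by fun_prop) continuous_const
    exact (TopologicalSpace.denseRange_denseSeq E).exists_mem_open hopen ⟨⟨w, hw⟩, hyw⟩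
  have hfind : Measurable fun y => Nat.find (hex y) :=
    measurable_find hex fun n => measurableSet_lt (measurable_id.dist measurable_const) hρ
  exact ⟨fun y => z (Nat.find (hex y)), fun y => (z _).2, fun y => Nat.find_spec (hex y),
    (StronglyMeasurable.of_discrete (f := fun n => f (z n))).comp_measurable hfind⟩

theorem exists_isQuasiProjection {X Y : Type*} [PseudoMetricSpace X] [SecondCountableTopology X]
    [MeasurableSpace X] [OpensMeasurableSpace X] [TopologicalSpace Y] {E : Set X}
    (hE : IsClosed E) (hne : E.Nonempty) (f : X → Y) :
    ∃ p, IsQuasiProjection E p ∧ StronglyMeasurable (f ∘ p) := by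
  classical
  let ρ : X → ℝ := E.piecewise 1 (fun y => 2 * infDist y E)
  have hρ : Measurable ρ :=
    measurable_one.piecewise hE.measurableSet (measurable_infDist.const_mul 2)
  have hlt (y : X) : infDist y E < ρ y := by
    by_cases hy : y ∈ E
    · simp [ρ, hy, infDist_zero_of_mem hy]
    · simp only [ρ, piecewise_eq_of_notMem _ _ _ hy]
      linarith [(hE.notMem_iff_infDist_pos hne).1 hy]
  obtain ⟨p, hmem, hdist, hmeas⟩ := exists_stronglyMeasurable_comp_dist_lt hne hρ hlt f
  exact ⟨p, ⟨hmem, fun y hy => by simpa [ρ, hy] using (hdist y).le,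
    fun y hy => by simpa [ρ, hy] using (hdist y).le⟩, hmeas⟩

namespace IsQuasiProjection

theorem dist_le_two_mul_dist_add_one {X : Type*} [PseudoMetricSpace X] {E : Set X} {p : X → X}
    (hp : IsQuasiProjection E p) {a : X} (ha : a ∈ E) (y : X) :
    dist y (p y) ≤ 2 * dist y a + 1 := by
  by_cases hy : y ∈ E
  · linarith [hp.dist_le_one y hy, dist_nonneg (x := y) (y := a)]
  · linarith [hp.dist_le y hy, infDist_le_dist_of_mem (x := y) ha]

theorem locallyIntegrable_comp {X G : Type*} [PseudoMetricSpace X] [ProperSpace X]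
    [MeasurableSpace X] [OpensMeasurableSpace X] {μ : Measure X} [IsLocallyFiniteMeasure μ]
    [NormedAddCommGroup G] {E : Set X} {p : X → X} (hp : IsQuasiProjection E p) (hE : IsClosed E)
    {f : X → G} (hf : ContinuousOn f E) (hmeas : AEStronglyMeasurable (f ∘ p) μ) :
    LocallyIntegrable (f ∘ p) μ := by
  intro x
  have hmaps : ∀ y ∈ ball x 1, p y ∈ closedBall x (2 * dist x (p x) + 4) := fun y hy => by
    rw [mem_ball] at hy
    rw [mem_closedBall, dist_comm]
    linarith [hp.dist_le_two_mul_dist_add_one (hp.mem x) y, dist_triangle y x (p x),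
      dist_triangle x y (p y), dist_comm x y]
  obtain ⟨M, hM⟩ := ((isCompact_closedBall x (2 * dist x (p x) + 4)).inter_left
    hE).exists_bound_of_continuousOn (hf.mono inter_subset_left)
  exact ⟨ball x 1, ball_mem_nhds x one_pos, IntegrableOn.of_bound measure_ball_lt_top
    hmeas.restrict M (ae_restrict_of_forall_mem measurableSet_ball fun y hy =>
      hM _ ⟨hp.mem y, hmaps y hy⟩)⟩

theorem dist_apply_le_of_mem_ball {X : Type*} [PseudoMetricSpace X] {E : Set X} {p : X → X}
    (hp : IsQuasiProjection E p) {x y : X} (hx : 0 < infDist x E)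
    (hy : y ∈ ball x (infDist x E / 2)) : dist (p y) x ≤ 4 * infDist x E := by
  rw [mem_ball] at hy
  have hyE : y ∉ E := fun h => by
    linarith [infDist_le_dist_of_mem (x := x) h, dist_comm x y]
  linarith [hp.dist_le y hyE, infDist_le_infDist_add_dist (s := E) (x := y) (y := x),
    dist_triangle_left (p y) x y]

end IsQuasiProjection

end QuasiProjection

section Flat

variable {V G : Type*} [NormedAddCommGroup V] [NormedAddCommGroup G] {f : V → G} {E : Set V}
  {a : V}

/-- Whitney's condition at `a` for the zero derivative: `f x - f y = o(x - y)` as `x` and `y` tend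
to `a` within `E`. It is the analogue within `E` of `HasStrictFDerivAt f 0 a`. -/
def IsFlatWithinAt (f : V → G) (E : Set V) (a : V) : Prop :=
  (fun q : V × V => f q.1 - f q.2) =o[𝓝[E ×ˢ E] (a, a)] fun q => q.1 - q.2

theorem isFlatWithinAt_of_forall_div_lt {f : V → ℝ}
    (hf : ∀ ε > (0 : ℝ), ∃ δ > (0 : ℝ), ∀ x ∈ E, ∀ y ∈ E,
      0 < ‖x - y‖ → ‖x - y‖ < δ → |f x - f y| / ‖x - y‖ < ε) (a : V) :
    IsFlatWithinAt f E a := by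
  refine isLittleO_iff.2 fun ε hε => ?_
  obtain ⟨δ, hδ, hlt⟩ := hf ε hε
  have hclose : ∀ᶠ q : V × V in 𝓝 (a, a), ‖q.1 - q.2‖ < δ :=
    (by fun_prop : Continuous fun q : V × V => ‖q.1 - q.2‖).continuousAt.eventually_lt_const
      (by simpa using hδ)
  filter_upwards [self_mem_nhdsWithin, nhdsWithin_le_nhds hclose] with q ⟨hx, hy⟩ hq
  rcases (norm_nonneg (q.1 - q.2)).eq_or_lt with hzero | hpos
  · simp [sub_eq_zero.1 (norm_eq_zero.1 hzero.symm)]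
  · exact ((div_lt_iff₀ hpos).1 (hlt _ hx _ hy hpos hq)).le

namespace IsFlatWithinAt

theorem exists_forall_norm_sub_le (hf : IsFlatWithinAt f E a) {ε : ℝ} (hε : 0 < ε) :
    ∃ η > 0, ∀ x ∈ E, ∀ y ∈ E, dist x a < η → dist y a < η →
      ‖f x - f y‖ ≤ ε * dist x y := by
  obtain ⟨η, hη, hsub⟩ := Metric.mem_nhdsWithin_iff.1 (isLittleO_iff.1 hf hε)
  refine ⟨η, hη, fun x hx y hy hxa hya => ?_⟩
  rw [dist_eq_norm]
  exact hsub (a := (x, y)) ⟨max_lt hxa hya, hx, hy⟩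

theorem isLittleO (hf : IsFlatWithinAt f E a) (ha : a ∈ E) :
    (fun x => f x - f a) =o[𝓝[E] a] fun x => x - a := by
  have hpair : Tendsto (fun x => (x, a)) (𝓝[E] a) (𝓝[E ×ˢ E] (a, a)) :=
    tendsto_nhdsWithin_iff.2
      ⟨((by fun_prop : Continuous fun x : V => (x, a)).tendsto a).mono_left nhdsWithin_le_nhds,
        eventually_mem_nhdsWithin.mono fun _ hx => ⟨hx, ha⟩⟩
  exact hf.comp_tendsto hpair

theorem continuousWithinAt (hf : IsFlatWithinAt f E a) (ha : a ∈ E) :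
    ContinuousWithinAt f E a :=
  tendsto_sub_nhds_zero_iff.1 <| (hf.isLittleO ha).trans_tendsto <|
    tendsto_sub_nhds_zero_iff.2 nhdsWithin_le_nhds

end IsFlatWithinAt

end Flat

section Gluing

variable {𝕜 V G : Type*} [NontriviallyNormedField 𝕜] [NormedAddCommGroup V] [NormedSpace 𝕜 V]
  [NormedAddCommGroup G] [NormedSpace 𝕜 G] {f g : V → G} {E : Set V} [DecidablePred (· ∈ E)]

theorem hasFDerivAt_zero_piecewise {a : V} (ha : a ∈ E)
    (hf : (fun x => f x - f a) =o[𝓝[E] a] fun x => x - a)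
    (hg : (fun x => g x - f a) =o[𝓝[Eᶜ] a] fun x => x - a) :
    HasFDerivAt (E.piecewise f g) (0 : V →L[𝕜] G) a := by
  rw [hasFDerivAt_iff_isLittleO, piecewise_eq_of_mem _ _ _ ha, ← nhdsWithin_univ,
    ← union_compl_self E, nhdsWithin_union]
  simp only [zero_apply, sub_zero]
  refine .sup (hf.congr' ?_ .rfl) (hg.congr' ?_ .rfl)
  · filter_upwards [self_mem_nhdsWithin] with x hx
    rw [piecewise_eq_of_mem _ _ _ hx]
  · filter_upwards [self_mem_nhdsWithin] with x hx
    rw [piecewise_eq_of_notMem _ _ _ hx]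

theorem contDiff_one_piecewise (hE : IsClosed E)
    (hf : ∀ a ∈ E, (fun x => f x - f a) =o[𝓝[E] a] fun x => x - a)
    (hg : ∀ a ∈ E, (fun x => g x - f a) =o[𝓝[Eᶜ] a] fun x => x - a)
    (hgE : ∀ x ∉ E, ContDiffAt 𝕜 1 g x)
    (hlim : ∀ a ∈ E, Tendsto (fderiv 𝕜 g) (𝓝[Eᶜ] a) (𝓝 0)) :
    ContDiff 𝕜 1 (E.piecewise f g) := by
  have hzero (a : V) (ha : a ∈ E) := hasFDerivAt_zero_piecewise (𝕜 := 𝕜) ha (hf a ha) (hg a ha)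
  have heq : ∀ x ∉ E, E.piecewise f g =ᶠ[𝓝 x] g := fun x hx =>
    eventually_of_mem (hE.isOpen_compl.mem_nhds hx) fun y hy => piecewise_eq_of_notMem _ _ _ hy
  have hoff : ∀ x ∉ E, ContDiffAt 𝕜 1 (E.piecewise f g) x := fun x hx =>
    (hgE x hx).congr_of_eventuallyEq (heq x hx)
  refine contDiff_one_iff_fderiv.2 ⟨fun x => ?_, continuous_iff_continuousAt.2 fun x => ?_⟩
  · by_cases hx : x ∈ E
    · exact (hzero x hx).differentiableAt
    · exact (hoff x hx).differentiableAt one_ne_zero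
  · by_cases hx : x ∈ E
    · rw [ContinuousAt, (hzero x hx).fderiv, ← nhdsWithin_univ, ← union_compl_self E,
        nhdsWithin_union, tendsto_sup]
      refine ⟨tendsto_const_nhds.congr' ?_, (hlim x hx).congr' ?_⟩
      · filter_upwards [self_mem_nhdsWithin] with y hy using (hzero y hy).fderiv.symm
      · filter_upwards [self_mem_nhdsWithin] with y hy using (heq y hy).fderiv_eq.symm
    · exact (hoff x hx).continuousAt_fderiv one_ne_zero

end Gluing

section Extension

variable {V : Type*} [NormedAddCommGroup V] [NormedSpace ℝ V] [FiniteDimensional ℝ V]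
  {G : Type*} [NormedAddCommGroup G] [NormedSpace ℝ G] [CompleteSpace G]
  {E : Set V} {f : V → G} {p : V → V} {a : V}

theorem IsFlatWithinAt.isLittleO_mollification [MeasurableSpace V] [BorelSpace V] {μ : Measure V}
    [IsLocallyFiniteMeasure μ] [μ.IsOpenPosMeasure] (hf : IsFlatWithinAt f E a)
    (hE : IsClosed E) (ha : a ∈ E) (hp : IsQuasiProjection E p)
    (hint : LocallyIntegrable (f ∘ p) μ) :
    (fun x => mollification (infDist · E) μ (f ∘ p) x - f a) =o[𝓝[Eᶜ] a] fun x => x - a := by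
  refine isLittleO_iff.2 fun ε hε => ?_
  obtain ⟨η, hη, hflat⟩ := hf.exists_forall_norm_sub_le (show 0 < ε / 5 by positivity)
  filter_upwards [self_mem_nhdsWithin,
    nhdsWithin_le_nhds (ball_mem_nhds a (show 0 < η / 5 by positivity))] with x hxE hxa
  have hx : 0 < infDist x E := (hE.notMem_iff_infDist_pos ⟨a, ha⟩).1 hxE
  rw [mem_ball] at hxa
  refine norm_mollification_sub_le (lipschitz_infDist_pt E) (fun _ => infDist_nonneg) hint hx
    fun y hy => ?_
  have hdist : dist (p y) a ≤ 5 * dist x a := by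
    linarith [hp.dist_apply_le_of_mem_ball hx hy, infDist_le_dist_of_mem (x := x) ha,
      dist_triangle (p y) x a]
  calc ‖f (p y) - f a‖ ≤ ε / 5 * dist (p y) a :=
        hflat _ (hp.mem y) a ha (by linarith) (by rwa [dist_self])
    _ ≤ ε / 5 * (5 * dist x a) := by gcongr
    _ = ε * ‖x - a‖ := by rw [dist_eq_norm]; ring

theorem IsFlatWithinAt.tendsto_fderiv_mollification [MeasurableSpace V] [BorelSpace V]
    {μ : Measure V} [μ.IsAddHaarMeasure] (hf : IsFlatWithinAt f E a) (hE : IsClosed E)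
    (ha : a ∈ E) (hp : IsQuasiProjection E p) (hint : LocallyIntegrable (f ∘ p) μ) :
    Tendsto (fderiv ℝ (mollification (infDist · E) μ (f ∘ p))) (𝓝[Eᶜ] a) (𝓝 0) := by
  obtain ⟨C, hC⟩ := exists_norm_fderiv_mollifierBump_le V
  have hC₀ : 0 ≤ C := (norm_nonneg _).trans (hC 0)
  set A := 5 / 2 * (5 / 2) ^ finrank ℝ V * C
  refine Metric.tendsto_nhds.2 fun ε hε => ?_
  obtain ⟨η, hη, hflat⟩ :=
    hf.exists_forall_norm_sub_le (show 0 < ε / (6 * (A + 1)) by positivity)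
  filter_upwards [self_mem_nhdsWithin,
    nhdsWithin_le_nhds (ball_mem_nhds a (show 0 < η / 5 by positivity))] with x hxE hxa
  have hx : 0 < infDist x E := (hE.notMem_iff_infDist_pos ⟨a, ha⟩).1 hxE
  rw [mem_ball] at hxa
  have hnear : ∀ y ∈ ball x (infDist x E / 2), dist (p y) a < η := fun y hy => by
    linarith [hp.dist_apply_le_of_mem_ball hx hy, infDist_le_dist_of_mem (x := x) ha,
      dist_triangle (p y) x a]
  have hosc : ∀ y ∈ ball x (infDist x E / 2),
      ‖f (p y) - f (p x)‖ ≤ ε / (6 * (A + 1)) * (6 * infDist x E) := fun y hy =>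
    (hflat _ (hp.mem y) _ (hp.mem x) (hnear y hy)
      (hnear x (mem_ball_self (by positivity)))).trans <| by
        gcongr
        linarith [hp.dist_apply_le_of_mem_ball hx hy, hp.dist_le x hxE,
          dist_triangle (p y) x (p x)]
  rw [dist_zero_right]
  calc ‖fderiv ℝ (mollification (infDist · E) μ (f ∘ p)) x‖
      ≤ A * (ε / (6 * (A + 1)) * (6 * infDist x E)) / infDist x E :=
        norm_fderiv_mollification_le (lipschitz_infDist_pt E) (fun _ => infDist_nonneg) hint hC
          hx hosc
    _ = A / (A + 1) * ε := by field_simp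
    _ < ε := mul_lt_of_lt_one_left hε ((div_lt_one (by positivity)).2 (lt_add_one A))

theorem whitney_extension_flat_general (hE : IsClosed E) (hf : ∀ a ∈ E, IsFlatWithinAt f E a) :
    ∃ F : V → G, ContDiff ℝ 1 F ∧ (∀ x ∈ E, F x = f x) ∧ ∀ x ∈ E, fderiv ℝ F x = 0 := by
  classical
  rcases E.eq_empty_or_nonempty with rfl | hne
  · exact ⟨0, contDiff_zero_fun, by simp, by simp⟩
  borelize V
  let μ : Measure V := Measure.addHaar
  obtain ⟨p, hp, hmeas⟩ := exists_isQuasiProjection hE hne f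
  have hint : LocallyIntegrable (f ∘ p) μ := hp.locallyIntegrable_comp hE
    (fun a ha => (hf a ha).continuousWithinAt ha) hmeas.aestronglyMeasurable
  have hlittle (a : V) (ha : a ∈ E) := (hf a ha).isLittleO_mollification hE ha hp hint
  refine ⟨E.piecewise f (mollification (infDist · E) μ (f ∘ p)), ?_,
    fun x hx => piecewise_eq_of_mem _ _ _ hx,
    fun x hx => (hasFDerivAt_zero_piecewise hx ((hf x hx).isLittleO hx) (hlittle x hx)).fderiv⟩
  exact contDiff_one_piecewise hE (fun a ha => (hf a ha).isLittleO ha) hlittle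
    (fun x hx => contDiffAt_mollification (lipschitz_infDist_pt E) (fun _ => infDist_nonneg) hint
      ((hE.notMem_iff_infDist_pos hne).1 hx))
    fun a ha => (hf a ha).tendsto_fderiv_mollification hE ha hp hint

end Extension

/-- A simple version of the Whitney Extension Theorem: if `f : E → ℝ` on a compact set
`E ⊆ ℝ^d` satisfies `|f x - f y| = o(|x - y|)` uniformly, then `f` extends to a `C¹`
function `F : ℝ^d → ℝ` whose derivative vanishes at every point of `E`. -/
theorem whitney_extension_flat
    (d : ℕ) (E : Set (EuclideanSpace ℝ (Fin d))) (hE : IsCompact E)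
    (f : EuclideanSpace ℝ (Fin d) → ℝ)
    (hf : ∀ ε > (0 : ℝ), ∃ δ > (0 : ℝ), ∀ x ∈ E, ∀ y ∈ E,
      0 < ‖x - y‖ → ‖x - y‖ < δ → |f x - f y| / ‖x - y‖ < ε) :
    ∃ F : EuclideanSpace ℝ (Fin d) → ℝ,
      ContDiff ℝ 1 F ∧ (∀ x ∈ E, F x = f x) ∧ (∀ x ∈ E, fderiv ℝ F x = 0) :=
  whitney_extension_flat_general hE.isClosed fun a _ => isFlatWithinAt_of_forall_div_lt hf a
end
end

section
/- Let φ_1, …, φ_N be contractive similitudes on ℝ^d, let C = C_1 ∪ ⋯ ∪ C_m (m ≥ 2) be a union of pairwise disjoint nonempty compact connected sets C_j, and let K be the attractor of the IFS with condensation {C; φ_1, …, φ_N}. Suppose there exist points a, b ∈ K and a_j, b_j ∈ C_j (1 ≤ j ≤ m) such that (K,{a,b}) = A_1 + ⋯ + A_{m+N} is a zipper decomposition, where A_1, …, A_{m+N} is a rearrangement of the buttons (C_1,{a_1,b_1}), …, (C_m,{a_m,b_m}), (φ_1(K),{φ_1(a),φ_1(b)}), …, (φ_N(K),{φ_N(a),φ_N(b)}).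 Then K is connected. -/
/-!
Call a set `ε`-chainable if any two of its points are joined by a chain in it with steps shorter
than `ε`. Connected sets are `ε`-chainable for every `ε > 0`, and conversely a compact set with that
property is connected. If `K` is `ε`-chainable, then each contracted copy `φ i '' K` is
`r * ε`-chainable, where `r < 1` bounds all the ratios, and so is each condensation component.
Successive pieces of the zipper meet, so chains can be concatenated and `K` itself is
`r * ε`-chainable. Starting from `ε > diam K` and iterating, `K` is chainable at every scale.
-/

open Set MeasureTheory

noncomputable section

open Filter Relation
open scoped NNReal Topology Uniformity

section Chainable

variable {X ι : Type*} [PseudoMetricSpace X] {s K : Set X} {A : ι → Set X} {ε δ : ℝ} {r : ℝ≥0}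

/-- `s` is *`ε`-chainable* if any two of its points are joined by a finite chain of points of `s`
with consecutive distances `< ε`. It approximates connectedness at scale `ε`, and is what the
contractions improve from one scale to the next. -/
def IsChainable (ε : ℝ) (s : Set X) : Prop :=
  ∀ x ∈ s, ∀ y ∈ s, ReflTransGen (fun u v ↦ u ∈ s ∧ v ∈ s ∧ dist u v < ε) x y

theorem isChainable_of_diam_lt (hs : Bornology.IsBounded s) (hε : Metric.diam s < ε) :
    IsChainable ε s :=
  fun _ hx _ hy ↦ .single ⟨hx, hy, (Metric.dist_le_diam_of_mem hs hx hy).trans_lt hε⟩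

theorem isChainable_of_isPreconnected (hε : 0 < ε) (hs : IsPreconnected s) : IsChainable ε s := by
  refine fun x hx y hy ↦ hs.induction₂'
    (ReflTransGen fun u v ↦ u ∈ s ∧ v ∈ s ∧ dist u v < ε) (fun u hu ↦ ?_)
    (fun _ _ _ _ _ _ ↦ ReflTransGen.trans) hx hy
  filter_upwards [self_mem_nhdsWithin, mem_nhdsWithin_of_mem_nhds (Metric.ball_mem_nhds u hε)]
    with v hv hvu
  exact ⟨.single ⟨hu, hv, Metric.mem_ball'.1 hvu⟩, .single ⟨hv, hu, hvu⟩⟩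

theorem IsChainable.mono_scale (hs : IsChainable ε s) (h : ε ≤ δ) : IsChainable δ s :=
  fun x hx y hy ↦ ReflTransGen.mono (fun _ _ ⟨hu, hv, huv⟩ ↦ ⟨hu, hv, huv.trans_le h⟩) _ _
    (hs x hx y hy)

theorem IsChainable.image {Y : Type*} [PseudoMetricSpace Y] {φ : X → Y} (hs : IsChainable ε s)
    (hr : 0 < r) (hφ : LipschitzOnWith r φ s) : IsChainable (r * ε) (φ '' s) := by
  rintro _ ⟨x, hx, rfl⟩ _ ⟨y, hy, rfl⟩
  refine ReflTransGen.lift φ (fun u v ⟨hu, hv, huv⟩ ↦ ?_) _ _ (hs x hx y hy)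
  exact ⟨mem_image_of_mem φ hu, mem_image_of_mem φ hv,
    (hφ.dist_le_mul u hu v hv).trans_lt (mul_lt_mul_of_pos_left huv hr)⟩

theorem IsChainable.iUnion_of_reflTransGen (hA : ∀ i, IsChainable ε (A i))
    (hmeet : ∀ i j, ReflTransGen (fun i j ↦ (A i ∩ A j).Nonempty) i j) :
    IsChainable ε (⋃ i, A i) := by
  have chain_of_mem : ∀ i, ∀ x ∈ A i, ∀ y ∈ A i,
      ReflTransGen (fun u v ↦ u ∈ ⋃ i, A i ∧ v ∈ ⋃ i, A i ∧ dist u v < ε) x y :=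
    fun i x hx y hy ↦ ReflTransGen.mono (fun _ _ ⟨hu, hv, huv⟩ ↦
      ⟨mem_iUnion_of_mem i hu, mem_iUnion_of_mem i hv, huv⟩) _ _ (hA i x hx y hy)
  intro x hx y hy
  obtain ⟨i, hxi⟩ := mem_iUnion.1 hx
  obtain ⟨j, hyj⟩ := mem_iUnion.1 hy
  induction hmeet i j generalizing y with
  | refl => exact chain_of_mem i x hxi y hyj
  | @tail k l _ hkl ih =>
    obtain ⟨z, hzk, hzl⟩ := hkl
    exact (ih z (mem_iUnion_of_mem k hzk) hzk).trans (chain_of_mem l z hzl y hyj)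

theorem isPreconnected_of_forall_isChainable (hs : IsCompact s)
    (h : ∀ ε > 0, IsChainable ε s) : IsPreconnected s := by
  refine isPreconnected_of_forall_constant fun f hf x hx y hy ↦ ?_
  have hf_unif : ∀ᶠ w in 𝓤 X, w ∈ s ×ˢ s → f w.1 = f w.2 :=
    eventually_inf_principal.1 <|
      (hs.uniformContinuousOn_of_continuous hf).eventually (mem_principal_self _)
  obtain ⟨ε, hε, hfε⟩ := Metric.mem_uniformity_dist.1 hf_unif
  have heq : ReflTransGen Eq (f x) (f y) :=
    ReflTransGen.lift f (fun u v ⟨hu, hv, huv⟩ ↦ hfε huv ⟨hu, hv⟩) _ _ (h ε hε x hx y hy)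
  rwa [reflTransGen_eq_self] at heq

theorem IsChainable.mul_of_iUnion_contractions (hK : IsChainable ε K) (hε : 0 < ε) (hr : 0 < r)
    (hKA : K = ⋃ i, A i) (hmeet : ∀ i j, ReflTransGen (fun i j ↦ (A i ∩ A j).Nonempty) i j)
    (hA : ∀ i, IsPreconnected (A i) ∨ ∃ φ : X → X, LipschitzOnWith r φ K ∧ A i = φ '' K) :
    IsChainable (r * ε) K := by
  rw [hKA]
  refine IsChainable.iUnion_of_reflTransGen (fun i ↦ ?_) hmeet
  rcases hA i with hconn | ⟨φ, hφ, hAφ⟩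
  · exact isChainable_of_isPreconnected (by positivity) hconn
  · exact hAφ ▸ hK.image hr hφ

theorem isPreconnected_of_iUnion_contractions (hK : IsCompact K) (hr0 : 0 < r) (hr1 : r < 1)
    (hKA : K = ⋃ i, A i) (hmeet : ∀ i j, ReflTransGen (fun i j ↦ (A i ∩ A j).Nonempty) i j)
    (hA : ∀ i, IsPreconnected (A i) ∨ ∃ φ : X → X, LipschitzOnWith r φ K ∧ A i = φ '' K) :
    IsPreconnected K := by
  obtain ⟨D, hD⟩ := exists_gt (Metric.diam K)
  have hD0 : 0 < D := Metric.diam_nonneg.trans_lt hD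
  have chainable_pow : ∀ n : ℕ, IsChainable (r ^ n * D) K := fun n ↦ by
    induction n with
    | zero => simpa using isChainable_of_diam_lt hK.isBounded hD
    | succ n ih =>
      rw [pow_succ', mul_assoc]
      exact ih.mul_of_iUnion_contractions (by positivity) hr0 hKA hmeet hA
  refine isPreconnected_of_forall_isChainable hK fun ε hε ↦ ?_
  obtain ⟨n, hn⟩ := exists_pow_lt_of_lt_one (div_pos hε hD0) (NNReal.coe_lt_one.2 hr1)
  exact (chainable_pow n).mono_scale ((lt_div_iff₀ hD0).1 hn).le

end Chainable

theorem IsZipperDecomp.reflTransGen_inter_nonempty {d k : ℕ} {K : Set (EuclideanSpace ℝ (Fin d))}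
    {a b : EuclideanSpace ℝ (Fin d)} {A : Fin k → Set (EuclideanSpace ℝ (Fin d))}
    {p q : Fin k → EuclideanSpace ℝ (Fin d)} (h : IsZipperDecomp K a b A p q) (ℓ ℓ' : Fin k) :
    ReflTransGen (fun ℓ ℓ' ↦ (A ℓ ∩ A ℓ').Nonempty) ℓ ℓ' := by
  obtain ⟨-, -, -, -, hadj, -⟩ := h
  have inter_succ : ∀ ℓ : Fin k, ¬ IsMax ℓ → (A ℓ ∩ A (Order.succ ℓ)).Nonempty := fun ℓ hℓ ↦ by
    have hsucc : (ℓ : ℕ) + 1 = (Order.succ ℓ : Fin k) := by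
      simpa using Order.covBy_succ_of_not_isMax hℓ
    obtain ⟨-, x, hx⟩ := hadj ℓ (Order.succ ℓ) hsucc
    exact hx ▸ singleton_nonempty x
  exact reflTransGen_of_succ _ (fun ℓ hℓ ↦ inter_succ ℓ hℓ.2.not_isMax)
    fun ℓ hℓ ↦ inter_comm _ _ ▸ inter_succ ℓ hℓ.2.not_isMax

theorem linear_ifs_with_condensation_attractor_connected_general {X ι : Type*}
    [PseudoMetricSpace X] [Finite ι] {K : Set X} (hKne : K.Nonempty) (hKcomp : IsCompact K)
    {A : ι → Set X} (hKA : K = ⋃ i, A i)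
    (hmeet : ∀ i j, ReflTransGen (fun i j ↦ (A i ∩ A j).Nonempty) i j)
    (hA : ∀ i, IsPreconnected (A i) ∨
      ∃ r < (1 : ℝ≥0), ∃ φ : X → X, LipschitzOnWith r φ K ∧ A i = φ '' K) :
    IsConnected K := by
  have hA_near_one : ∀ i, ∀ᶠ r in 𝓝[<] (1 : ℝ≥0),
      IsPreconnected (A i) ∨ ∃ φ : X → X, LipschitzOnWith r φ K ∧ A i = φ '' K := fun i ↦ by
    rcases hA i with hconn | ⟨r, hr, φ, hφ, hAφ⟩
    · exact .of_forall fun _ ↦ .inl hconn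
    · filter_upwards [Ioo_mem_nhdsLT hr] with r' hr'
      exact .inr ⟨φ, hφ.weaken hr'.1.le, hAφ⟩
  have : (𝓝[<] (1 : ℝ≥0)).NeBot := nhdsLT_neBot_of_exists_lt ⟨0, one_pos⟩
  obtain ⟨r, hAr, hr0, hr1⟩ :=
    ((eventually_all.2 hA_near_one).and (Ioo_mem_nhdsLT one_pos)).exists
  exact ⟨hKne, isPreconnected_of_iUnion_contractions hKcomp hr0 hr1 hKA hmeet hAr⟩

/-- The attractor of a linear IFS with condensation is connected. -/
theorem linear_ifs_with_condensation_attractor_connected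
    (d N m : ℕ) (hm : 2 ≤ m)
    -- the contractive similitudes φ_1, …, φ_N
    (φ : Fin N → EuclideanSpace ℝ (Fin d) → EuclideanSpace ℝ (Fin d))
    (ρ : Fin N → ℝ) (hρ : ∀ i, ρ i ∈ Set.Ioo (0 : ℝ) 1)
    (hsim : ∀ i x y, dist (φ i x) (φ i y) = ρ i * dist x y)
    -- the condensation set C = C_1 ∪ ⋯ ∪ C_m, a disjoint union of nonempty
    -- compact connected sets
    (C : Fin m → Set (EuclideanSpace ℝ (Fin d)))
    (hCcomp : ∀ j, IsCompact (C j)) (hCconn : ∀ j, IsConnected (C j))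
    (hCdisj : Pairwise fun j j' => Disjoint (C j) (C j'))
    -- K is the attractor of the IFS with condensation {C; φ_1, …, φ_N}
    (K : Set (EuclideanSpace ℝ (Fin d)))
    (hKne : K.Nonempty) (hKcomp : IsCompact K)
    (hK : K = (⋃ j, C j) ∪ ⋃ i, φ i '' K)
    -- the endpoints a, b ∈ K and a_j, b_j ∈ C_j
    (a b : EuclideanSpace ℝ (Fin d)) (ha : a ∈ K) (hb : b ∈ K)
    (ca cb : Fin m → EuclideanSpace ℝ (Fin d))
    (hca : ∀ j, ca j ∈ C j) (hcb : ∀ j, cb j ∈ C j)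
    -- (K,{a,b}) = A_1 + ⋯ + A_{m+N} is a zipper decomposition, where the buttons
    -- A_ℓ are a rearrangement (via σ) of (C_j,{a_j,b_j}) and (φ_i(K),{φ_i(a),φ_i(b)})
    (A : Fin (m + N) → Set (EuclideanSpace ℝ (Fin d)))
    (p q : Fin (m + N) → EuclideanSpace ℝ (Fin d))
    (σ : Fin (m + N) ≃ (Fin m ⊕ Fin N))
    (hrearr : ∀ ℓ : Fin (m + N),
      Sum.elim
        (fun j => A ℓ = C j ∧ ({p ℓ, q ℓ} : Set (EuclideanSpace ℝ (Fin d))) = {ca j, cb j})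
        (fun i => A ℓ = φ i '' K ∧ ({p ℓ, q ℓ} : Set (EuclideanSpace ℝ (Fin d))) = {φ i a, φ i b})
        (σ ℓ))
    (hzip : IsZipperDecomp K a b A p q) :
    IsConnected K := by
  refine linear_ifs_with_condensation_attractor_connected_general hKne hKcomp hzip.1
    hzip.reflTransGen_inter_nonempty fun ℓ ↦ ?_
  have hℓ := hrearr ℓ
  rcases hσ : σ ℓ with j | i <;> rw [hσ] at hℓ
  · obtain ⟨hAC, -⟩ := hℓ
    exact .inl (hAC ▸ (hCconn j).isPreconnected)
  · obtain ⟨hAφ, -⟩ := hℓ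
    have hφ : LipschitzWith (ρ i).toNNReal (φ i) := .of_dist_le' fun x y ↦ (hsim i x y).le
    exact .inr ⟨_, Real.toNNReal_lt_one.2 (hρ i).2, φ i, hφ.lipschitzOnWith, hAφ⟩
end
end
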